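/- Suppose ℙ(X ≠ 1) > 0. Let ν be a σ-ergodic measure satisfying property (G); if Q = Q_{h_ν(σ)}, suppose in addition that ν satisfies property (G̃). Then, if h_ν(σ) = h_X, the measure ν is Q-singular. -/

import Mathlib

open MeasureTheory ProbabilityTheory Filter Set
open scoped ENNReal

noncomputable section

/-- The one-sided symbolic space over the alphabet `{0, …, b-1}`. -/
abbrev SymbSpace (b : ℕ) : Type := ℕ → Fin b

/-- The cylinder `[w]` of sequences starting with the finite word `w`. -/
def cylinder {b : ℕ} (w : List (Fin b)) : Set (SymbSpace b) :=
  {x | ∀ i : Fin w.length, x i = w.get i}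

/-- The prefix `x|_n` of `x` of length `n`, as a finite word. -/
def wordPrefix {b : ℕ} (x : SymbSpace b) (n : ℕ) : List (Fin b) :=
  List.ofFn (fun i : Fin n => x i)

/-- `Y_w = X_{w_1} X_{w_1w_2} ⋯ X_{w_1⋯w_n}`. -/
def cascadeY {b : ℕ} {Ω : Type*} (X : List (Fin b) → Ω → ℝ) (w : List (Fin b)) (ω : Ω) : ℝ :=
  ∏ k ∈ Finset.range w.length, X (w.take (k + 1)) ω

/-- The total mass `Z_n = ∑_{|u| = n} Y_u ν([u])`. -/
def cascadeZ {b : ℕ} {Ω : Type*} (X : List (Fin b) → Ω → ℝ) (ν : Measure (SymbSpace b))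
    (n : ℕ) (ω : Ω) : ℝ :=
  ∑ u : Fin n → Fin b, cascadeY X (List.ofFn u) ω * (ν (cylinder (List.ofFn u))).toReal

/-- `Z = limsup_n Z_n`. -/
def cascadeZlim {b : ℕ} {Ω : Type*} (X : List (Fin b) → Ω → ℝ) (ν : Measure (SymbSpace b))
    (ω : Ω) : ℝ :=
  Filter.limsup (fun n => cascadeZ X ν n ω) atTop

/-- Assumption (M1): the weights `X_u`, `u` a nonempty finite word, are i.i.d. with common
law that of the nonnegative random variable `X₀` of expectation 1. -/
structure CascadeM1 {b : ℕ} {Ω : Type*} [MeasurableSpace Ω] (P : Measure Ω)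
    (X : List (Fin b) → Ω → ℝ) (X₀ : Ω → ℝ) : Prop where
  meas : ∀ w, Measurable (X w)
  nonneg : ∀ w ω, 0 ≤ X w ω
  meas₀ : Measurable X₀
  nonneg₀ : ∀ ω, 0 ≤ X₀ ω
  mean₀ : ∫ ω, X₀ ω ∂P = 1
  indep : iIndepFun
    (fun w : {w : List (Fin b) // w ≠ []} => X w.1) P
  ident : ∀ w : List (Fin b), w ≠ [] → IdentDistrib (X w) X₀ P P

/-- `h_X = E(X log X) ∈ [0, ∞]` (well defined since `x log x ≥ -e⁻¹` and, by convexity,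
`E(X log X) ≥ E(X) log E(X) = 0`), encoded as an extended nonnegative real. -/
def entropyX {Ω : Type*} [MeasurableSpace Ω] (P : Measure Ω) (X₀ : Ω → ℝ) : ℝ≥0∞ :=
  (∫⁻ ω, ENNReal.ofReal (X₀ ω * Real.log (X₀ ω)) ∂P) -
    (∫⁻ ω, ENNReal.ofReal (-(X₀ ω * Real.log (X₀ ω))) ∂P)

/-- The lower local dimension `liminf_n (-log ν([x|_n]) / n)` of `ν` at `x`, valued
in `[0, ∞]`. -/
def lowerLocalDim {b : ℕ} (ν : Measure (SymbSpace b)) (x : SymbSpace b) : ℝ≥0∞ :=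
  Filter.liminf
    (fun n : ℕ => ENNReal.ofReal (-Real.log ((ν (cylinder (wordPrefix x n))).toReal) / n))
    atTop

/-- The upper local dimension `limsup_n (-log ν([x|_n]) / n)` of `ν` at `x`. -/
def upperLocalDim {b : ℕ} (ν : Measure (SymbSpace b)) (x : SymbSpace b) : ℝ≥0∞ :=
  Filter.limsup
    (fun n : ℕ => ENNReal.ofReal (-Real.log ((ν (cylinder (wordPrefix x n))).toReal) / n))
    atTop

/-- The lower Hausdorff dimension of `ν`: the `ν`-essential infimum of the lower local
dimension. -/
def lowerHausdorffDim {b : ℕ} (ν : Measure (SymbSpace b)) : ℝ≥0∞ :=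
  essInf (lowerLocalDim ν) ν

/-- The upper Hausdorff dimension of `ν`: the `ν`-essential supremum of the lower local
dimension. -/
def upperHausdorffDim {b : ℕ} (ν : Measure (SymbSpace b)) : ℝ≥0∞ :=
  essSup (lowerLocalDim ν) ν

/-- The upper packing dimension of `ν`: the `ν`-essential supremum of the upper local
dimension. -/
def upperPackingDim {b : ℕ} (ν : Measure (SymbSpace b)) : ℝ≥0∞ :=
  essSup (upperLocalDim ν) ν


/-- The left shift on the one-sided symbolic space. -/
def shiftMap (b : ℕ) : SymbSpace b → SymbSpace b := fun x n => x (n + 1)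

/-- The entropy sums `n⁻¹ ∑_{|u| = n} −ν([u]) log ν([u])`, whose limit is the
measure-theoretic entropy `h_ν(σ)`. -/
def entropySeq {b : ℕ} (ν : Measure (SymbSpace b)) (n : ℕ) : ℝ :=
  (n : ℝ)⁻¹ * ∑ u : Fin n → Fin b,
    -((ν (cylinder (List.ofFn u))).toReal * Real.log ((ν (cylinder (List.ofFn u))).toReal))

/-- Property (G): there are measurable functions `C ≥ 1` and `f`, finite `ν`-a.e., with
`C(x)⁻¹ e^{∑_{k<n} f(σᵏx)} ≤ ν([x|_n]) ≤ C(x) e^{∑_{k<n} f(σᵏx)}` for `ν`-a.e. `x` and all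
`n ≥ 1`. -/
def PropertyG {b : ℕ} (ν : Measure (SymbSpace b)) (f : SymbSpace b → ℝ) : Prop :=
  Measurable f ∧ ∃ C : SymbSpace b → ℝ, Measurable C ∧ (∀ᵐ x ∂ν, 1 ≤ C x) ∧
    (∀ᵐ x ∂ν, ∀ n : ℕ, 1 ≤ n →
      (C x)⁻¹ * Real.exp (∑ k ∈ Finset.range n, f ((shiftMap b)^[k] x)) ≤
          (ν (cylinder (wordPrefix x n))).toReal ∧
        (ν (cylinder (wordPrefix x n))).toReal ≤
          C x * Real.exp (∑ k ∈ Finset.range n, f ((shiftMap b)^[k] x)))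

/-- `ν` is the uniform measure `λ`, i.e. assigns mass `b^{-|u|}` to every cylinder `[u]`. -/
def IsUniformMeasure {b : ℕ} (ν : Measure (SymbSpace b)) : Prop :=
  ∀ w : List (Fin b), ν (cylinder w) = ((b : ℝ≥0∞))⁻¹ ^ w.length

/-- Property (G̃): `ν` satisfies (G) with potential `f`, and if `ν` is not the uniform
measure then `limsup_n ∑_{k<n} (f(σᵏx) + h_ν(σ)) = ∞` for `ν`-a.e. `x`. -/
def PropertyGtilde {b : ℕ} (ν : Measure (SymbSpace b)) (f : SymbSpace b → ℝ) (hν : ℝ) :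
    Prop :=
  PropertyG ν f ∧ (¬ IsUniformMeasure ν →
    ∀ᵐ x ∂ν, ∀ M : ℝ, ∃ᶠ n in atTop,
      M ≤ ∑ k ∈ Finset.range n, (f ((shiftMap b)^[k] x) + hν))

/-- `Q = Q_α`: the common law of the weights is `ℙ(X = e^α) = e^{-α}`,
`ℙ(X = 0) = 1 − e^{-α}`. -/
def IsQalphaCascade {Ω : Type*} [MeasurableSpace Ω] (P : Measure Ω) (X₀ : Ω → ℝ) (α : ℝ) :
    Prop :=
  P {ω | X₀ ω = Real.exp α} = ENNReal.ofReal (Real.exp (-α)) ∧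
    P {ω | X₀ ω = 0} = 1 - ENNReal.ofReal (Real.exp (-α))

/-!
If `Z_n` did not tend to `0`, Doob's theorem would give it a positive limit with positive
probability. Drawing a path `x` from `ν` and size-biasing the weights met along `x` (the many-to-one
formula), this is excluded as soon as the mass `ξ₀ ⋯ ξₙ₋₁ ν([x|ₙ])` of the path is almost surely
unbounded. By (G), the logarithm of this mass is, up to a constant depending on `x`, the Birkhoff
sum of `log ξ₀ + f(x)` along the product of `σ` with a Bernoulli shift, an ergodic system, and
`h_ν(σ) = h_X` says that these sums have no negative drift. If they were bounded above, then
`log ξ₀ + f(x)` would be a coboundary, and independence would force `log ξ₀` to be constant, that is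
`Q = Q_{h_ν(σ)}`. In that case (G̃) makes the sums unbounded, unless `ν` is the uniform measure, for
which `Z_n` is, up to normalization, the size of a critical branching process.
-/

section BernoulliShift

variable {S E : Type*}

/-- The left shift on sequences with values in an arbitrary type; on `SymbSpace b` it is
`shiftMap b`. -/
def tailSeq (ξ : ℕ → E) : ℕ → E := fun n => ξ (n + 1)

lemma tailSeq_iterate_apply (N : ℕ) (ξ : ℕ → E) (k : ℕ) : tailSeq^[N] ξ k = ξ (k + N) := by
  induction N generalizing ξ with
  | zero => rfl
  | succ N ih => rw [Function.iterate_succ_apply, ih]; rfl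

variable [MeasurableSpace S] [MeasurableSpace E]

lemma measurable_tailSeq : Measurable (tailSeq : (ℕ → E) → ℕ → E) :=
  measurable_pi_lambda _ fun n => measurable_pi_apply (n + 1)

/-- The law of a sequence of independent random variables with common law the probability measure
`μ`. -/
abbrev iidMeasure (μ : Measure E) : Measure (ℕ → E) :=
  Measure.infinitePi fun _ => μ

variable (μ : Measure E) [IsProbabilityMeasure μ]

lemma iIndepFun_eval_iidMeasure : iIndepFun (fun n (ξ : ℕ → E) => ξ n) (iidMeasure μ) :=
  iIndepFun_infinitePi (X := fun _ a => a) fun _ => measurable_id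

lemma measurePreserving_tailSeq : MeasurePreserving tailSeq (iidMeasure μ) (iidMeasure μ) :=
  ⟨measurable_tailSeq, Measure.map_infinitePi_infinitePi_of_inj (add_left_injective 1)⟩

lemma measurePreserving_restrict_fin (n : ℕ) :
    MeasurePreserving (fun (ξ : ℕ → E) (i : Fin n) => ξ i) (iidMeasure μ)
      (Measure.pi fun _ : Fin n => μ) :=
  ⟨by fun_prop, (Measure.map_infinitePi_infinitePi_of_inj Fin.val_injective).trans
    (Measure.infinitePi_eq_pi _)⟩

lemma comap_tailSeq_iterate_le (N : ℕ) :
    MeasurableSpace.comap (tailSeq^[N] : (ℕ → E) → ℕ → E) MeasurableSpace.pi ≤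
      ⨆ i ≥ N, MeasurableSpace.comap (fun ξ : ℕ → E => ξ i) inferInstance := by
  simp only [MeasurableSpace.pi, MeasurableSpace.comap_iSup, MeasurableSpace.comap_comp,
    iSup_le_iff]
  intro k
  have coord : (fun ξ : ℕ → E => ξ k) ∘ tailSeq^[N] = fun ξ => ξ (k + N) :=
    funext fun ξ => tailSeq_iterate_apply N ξ k
  rw [coord]
  exact le_iSup₂_of_le (k + N) (Nat.le_add_left N k) le_rfl

lemma indepFun_eval_zero_tailSeq :
    IndepFun (fun ξ : ℕ → E => ξ 0) tailSeq (iidMeasure μ) := by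
  have disj : Disjoint ({0} : Set ℕ) (Ici 1) := by simp
  have indep := indep_iSup_of_disjoint (fun n => (measurable_pi_apply n).comap_le)
    (iIndepFun_eval_iidMeasure μ) disj
  refine indep_of_indep_of_le_left (indep_of_indep_of_le_right indep ?_) ?_
  · exact comap_tailSeq_iterate_le 1
  · exact le_iSup₂_of_le 0 rfl le_rfl

lemma integral_eval_zero_mul_tailSeq {F : E → ℝ} {H : (ℕ → E) → ℝ} (hF : Measurable F)
    (hH : Measurable H) :
    ∫ ξ, F (ξ 0) * H (tailSeq ξ) ∂iidMeasure μ = (∫ a, F a ∂μ) * ∫ ξ, H ξ ∂iidMeasure μ := by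
  have head : ∫ ξ, F (ξ 0) ∂iidMeasure μ = ∫ a, F a ∂μ :=
    (measurePreserving_eval_infinitePi (fun _ => μ) 0).hasLaw.integral_comp
      hF.aestronglyMeasurable
  have tail : ∫ ξ, H (tailSeq ξ) ∂iidMeasure μ = ∫ ξ, H ξ ∂iidMeasure μ :=
    (measurePreserving_tailSeq μ).hasLaw.integral_comp hH.aestronglyMeasurable
  rw [← head, ← tail]
  exact ((indepFun_eval_zero_tailSeq μ).comp hF hH).integral_fun_mul_eq_mul_integral
    (hF.comp (measurable_pi_apply 0)).aestronglyMeasurable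
    (hH.comp measurable_tailSeq).aestronglyMeasurable

lemma iidMeasure_zero_or_one_of_tail {A : Set (ℕ → E)}
    (hA : ∀ N, ∃ B, MeasurableSet B ∧ tailSeq^[N] ⁻¹' B = A) :
    iidMeasure μ A = 0 ∨ iidMeasure μ A = 1 := by
  refine measure_zero_or_one_of_measurableSet_limsup_atTop
    (fun n => (measurable_pi_apply n).comap_le) (iIndepFun_eval_iidMeasure μ) ?_
  rw [limsup_eq_iInf_iSup_of_nat, MeasurableSpace.measurableSet_iInf]
  intro N
  obtain ⟨B, hB, rfl⟩ := hA N
  exact comap_tailSeq_iterate_le N _ ⟨B, hB, rfl⟩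

/-- The product of an ergodic system with a Bernoulli shift is ergodic: the fibers of an invariant
set are tail events, and their probability is an invariant function of the base point. -/
theorem ergodic_prodMap_tailSeq {T : S → S} {ν : Measure S} [IsProbabilityMeasure ν]
    (hT : Ergodic T ν) :
    Ergodic (Prod.map T tailSeq) (ν.prod (iidMeasure μ)) := by
  refine ⟨hT.toMeasurePreserving.prod (measurePreserving_tailSeq μ), ⟨fun A hA hinv => ?_⟩⟩
  have hfib (x : S) : MeasurableSet (Prod.mk x ⁻¹' A) := measurable_prodMk_left hA
  have fiber_tail (N : ℕ) (x : S) :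
      tailSeq^[N] ⁻¹' (Prod.mk (T^[N] x) ⁻¹' A) = Prod.mk x ⁻¹' A := by
    have iter : (Prod.map T tailSeq)^[N] ⁻¹' A = A :=
      (show Function.IsFixedPt (preimage (Prod.map T tailSeq)) A from hinv).preimage_iterate N
    ext ξ
    simpa [Prod.map_iterate] using congr_arg ((x, ξ) ∈ ·) iter
  have fiber_zero_one (x : S) := iidMeasure_zero_or_one_of_tail μ
    fun N => ⟨_, hfib (T^[N] x), fiber_tail N x⟩
  have fiber_inv : (fun x => iidMeasure μ (Prod.mk x ⁻¹' A)) ∘ T =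
      fun x => iidMeasure μ (Prod.mk x ⁻¹' A) := by
    funext x
    rw [Function.comp_apply, ← (measurePreserving_tailSeq μ).measure_preimage
      (hfib (T x)).nullMeasurableSet]
    exact congr_arg _ (fiber_tail 1 x)
  obtain ⟨c, hc⟩ := hT.toPreErgodic.ae_eq_const_of_ae_eq_comp
    (measurable_measure_prodMk_left hA) fiber_inv
  have measure_eq : ν.prod (iidMeasure μ) A = c := by
    rw [Measure.prod_apply hA, lintegral_congr_ae hc]
    simp
  obtain ⟨x, hx⟩ := hc.exists
  rw [eventuallyConst_set', ae_eq_empty, ae_eq_univ, prob_compl_eq_zero_iff hA, measure_eq]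
  simpa only [hx] using! fiber_zero_one x

end BernoulliShift

section BirkhoffSums

variable {α : Type*} {T : α → α} {g : α → ℝ}

/-- The points along whose orbit the Birkhoff sums of `g` are bounded above. -/
def birkhoffBounded (T : α → α) (g : α → ℝ) : Set α :=
  {y | BddAbove (range fun n => birkhoffSum T g n y)}

lemma notMem_birkhoffBounded_iff {y : α} :
    y ∉ birkhoffBounded T g ↔ ∀ M, ∃ n, M < birkhoffSum T g n y := by
  simp only [birkhoffBounded, mem_ofPred_eq, not_bddAbove_iff, exists_range_iff]

/-- The supremum of the Birkhoff sums of `g`; it takes a junk value off `birkhoffBounded T g`. -/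
def birkhoffSup (T : α → α) (g : α → ℝ) (y : α) : ℝ := ⨆ n, birkhoffSum T g n y

/-- The defect of `birkhoffSup T g` as a solution `U` of the cohomological equation
`U = g + U ∘ T`. -/
def birkhoffDefect (T : α → α) (g : α → ℝ) (y : α) : ℝ :=
  birkhoffSup T g y - g y - birkhoffSup T g (T y)

lemma birkhoffSum_le_birkhoffSup {y : α} (hy : y ∈ birkhoffBounded T g) (n : ℕ) :
    birkhoffSum T g n y ≤ birkhoffSup T g y :=
  le_ciSup hy n

lemma birkhoffSup_nonneg (y : α) : 0 ≤ birkhoffSup T g y := by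
  by_cases hy : y ∈ birkhoffBounded T g
  · exact birkhoffSum_le_birkhoffSup hy 0
  · exact (Real.iSup_of_not_bddAbove hy).ge

lemma preimage_birkhoffBounded : T ⁻¹' birkhoffBounded T g = birkhoffBounded T g := by
  ext y
  simp only [mem_preimage, birkhoffBounded, mem_ofPred_eq, bddAbove_def, forall_mem_range]
  constructor
  · rintro ⟨K, hK⟩
    refine ⟨max 0 (g y + K), fun n => ?_⟩
    cases n with
    | zero => exact le_max_left _ _
    | succ n => rw [birkhoffSum_succ']; exact le_max_of_le_right (by gcongr; exact hK n)
  · rintro ⟨K, hK⟩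
    exact ⟨K - g y, fun n => le_sub_iff_add_le'.2 (birkhoffSum_succ' T g n y ▸ hK (n + 1))⟩

lemma birkhoffDefect_nonneg {y : α} (hy : y ∈ birkhoffBounded T g) :
    0 ≤ birkhoffDefect T g y := by
  have shifted : birkhoffSup T g (T y) ≤ birkhoffSup T g y - g y := ciSup_le fun n =>
    le_sub_iff_add_le'.2 (birkhoffSum_succ' T g n y ▸ birkhoffSum_le_birkhoffSup hy (n + 1))
  exact sub_nonneg.2 shifted

lemma birkhoffSum_birkhoffDefect (n : ℕ) (y : α) :
    birkhoffSum T (birkhoffDefect T g) n y =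
      birkhoffSup T g y - birkhoffSup T g (T^[n] y) - birkhoffSum T g n y := by
  induction n with
  | zero => simp
  | succ n ih =>
    rw [birkhoffSum_succ, birkhoffSum_succ, ih, Function.iterate_succ_apply', birkhoffDefect]
    ring

lemma birkhoffSum_min_birkhoffDefect_add_le (n : ℕ) (y : α) :
    birkhoffSum T (fun z => min (birkhoffDefect T g z) 1) n y + birkhoffSum T g n y ≤
      birkhoffSup T g y := by
  have trunc : birkhoffSum T (fun z => min (birkhoffDefect T g z) 1) n y ≤
      birkhoffSum T (birkhoffDefect T g) n y :=
    Finset.sum_le_sum fun _ _ => min_le_left _ _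
  have rest := birkhoffSup_nonneg (T := T) (g := g) (T^[n] y)
  rw [birkhoffSum_birkhoffDefect] at trunc
  linarith

variable [MeasurableSpace α]

lemma measurable_birkhoffSum (hT : Measurable T) (hg : Measurable g) (n : ℕ) :
    Measurable (birkhoffSum T g n) :=
  Finset.measurable_sum _ fun k _ => hg.comp (hT.iterate k)

lemma measurableSet_birkhoffBounded (hT : Measurable T) (hg : Measurable g) :
    MeasurableSet (birkhoffBounded T g) :=
  measurableSet_bddAbove_range fun n => measurable_birkhoffSum hT hg n

lemma measurable_birkhoffSup (hT : Measurable T) (hg : Measurable g) :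
    Measurable (birkhoffSup T g) :=
  .iSup fun n => measurable_birkhoffSum hT hg n

lemma measurable_birkhoffDefect (hT : Measurable T) (hg : Measurable g) :
    Measurable (birkhoffDefect T g) :=
  ((measurable_birkhoffSup hT hg).sub hg).sub ((measurable_birkhoffSup hT hg).comp hT)

variable {ρ : Measure α}

lemma integrable_birkhoffSum (hT : MeasurePreserving T ρ ρ) (hg : Integrable g ρ) (n : ℕ) :
    Integrable (birkhoffSum T g n) ρ :=
  integrable_finsetSum _ fun k _ => (hT.iterate k).integrable_comp_of_integrable hg

lemma integral_birkhoffSum (hT : MeasurePreserving T ρ ρ) (hg : Integrable g ρ) (n : ℕ) :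
    ∫ y, birkhoffSum T g n y ∂ρ = n * ∫ y, g y ∂ρ := by
  have invariant (k : ℕ) : ∫ y, g (T^[k] y) ∂ρ = ∫ y, g y ∂ρ :=
    (hT.iterate k).hasLaw.integral_comp hg.aestronglyMeasurable
  calc ∫ y, birkhoffSum T g n y ∂ρ = ∑ k ∈ Finset.range n, ∫ y, g (T^[k] y) ∂ρ :=
        integral_finsetSum _ fun k _ => (hT.iterate k).integrable_comp_of_integrable hg
    _ = n * ∫ y, g y ∂ρ := by simp [invariant]

lemma ae_mem_or_ae_notMem_birkhoffBounded (hT : Ergodic T ρ) (hg : Measurable g) :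
    (∀ᵐ y ∂ρ, y ∈ birkhoffBounded T g) ∨ ∀ᵐ y ∂ρ, y ∉ birkhoffBounded T g :=
  hT.ae_mem_or_ae_notMem (measurableSet_birkhoffBounded hT.measurable hg)
    preimage_birkhoffBounded

end BirkhoffSums

section CohomologicalEquation

variable {α : Type*} [MeasurableSpace α] {ρ : Measure α} [IsFiniteMeasure ρ]

lemma tendsto_integral_min_div_nat {B : α → ℝ} (hB : Measurable B) (c : ℝ) :
    Tendsto (fun n : ℕ => ∫ y, min (|B y| / n) |c| ∂ρ) atTop (nhds 0) := by
  rw [← integral_zero α ℝ (μ := ρ)]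
  refine tendsto_integral_of_dominated_convergence (fun _ => |c|)
    (fun n => ((hB.abs.div_const _).min measurable_const).aestronglyMeasurable)
    (integrable_const |c|) (fun n => ae_of_all ρ fun y => ?_) (ae_of_all ρ fun y => ?_)
  · rw [Real.norm_of_nonneg (le_min (by positivity) (by positivity))]
    exact min_le_right _ _
  · have lim := (tendsto_const_div_atTop_nhds_zero_nat |B y|).min (tendsto_const_nhds (x := |c|))
    rwa [min_eq_left (abs_nonneg c)] at lim

/-- Reverse Fatou: `D n ≤ min (B / n) c + E n`, whose first term is dominated by a constant. -/
lemma nonpos_of_tendsto_integral_of_le_div_nat {D E : ℕ → α → ℝ} {B : α → ℝ} {c d : ℝ}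
    (hD : ∀ n, Integrable (D n) ρ) (hE : ∀ n, Integrable (E n) ρ) (hB : Measurable B)
    (hDB : ∀ n, ∀ᵐ y ∂ρ, D n y ≤ B y / n) (hDE : ∀ n, ∀ᵐ y ∂ρ, D n y ≤ c + E n y)
    (hE0 : Tendsto (fun n => ∫ y, |E n y| ∂ρ) atTop (nhds 0))
    (hd : Tendsto (fun n => ∫ y, D n y ∂ρ) atTop (nhds d)) : d ≤ 0 := by
  have upper := (tendsto_integral_min_div_nat (ρ := ρ) hB c).add hE0
  rw [add_zero] at upper
  refine le_of_tendsto_of_tendsto' hd upper fun n => ?_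
  have int_min : Integrable (fun y => min (|B y| / n) |c|) ρ := by
    refine .of_bound ((hB.abs.div_const _).min measurable_const).aestronglyMeasurable |c|
      (ae_of_all _ fun y => ?_)
    rw [Real.norm_of_nonneg (le_min (by positivity) (by positivity))]
    exact min_le_right _ _
  rw [← integral_add int_min (hE n).abs]
  refine integral_mono_ae (hD n) (int_min.add (hE n).abs) ?_
  filter_upwards [hDB n, hDE n] with y h_div h_const
  have abs_div : B y / n ≤ |B y| / n := by gcongr; exact le_abs_self _
  rw [← min_add_add_right]
  exact le_min (by linarith [abs_nonneg (E n y)])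
    (by linarith [le_abs_self c, le_abs_self (E n y)])

variable {T : α → α} {a : α → ℝ} {ℓ : ℕ → α → ℝ} {h : ℝ}

/-- The averages `(∑_{k < n} (q + a) ∘ T^k + ℓ n) / n` are `O(1 / n)` pointwise, and their
integrals converge to `∫ q + ∫ a - h`. -/
lemma integral_add_integral_le_of_birkhoffSum_le (hT : MeasurePreserving T ρ ρ)
    (ha : Integrable a ρ)
    (hmean : Tendsto (fun n => ∫ y, |birkhoffAverage ℝ T a n y - ∫ z, a z ∂ρ| ∂ρ) atTop (nhds 0))
    (hℓ : ∀ n, Integrable (ℓ n) ρ) (hℓ0 : ∀ n y, ℓ n y ≤ 0)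
    (hh : Tendsto (fun n : ℕ => (n : ℝ)⁻¹ * ∫ y, ℓ n y ∂ρ) atTop (nhds (-h)))
    {q U : α → ℝ} (hq : Integrable q ρ) (hq1 : ∀ y, q y ≤ 1) (hU : Measurable U)
    (hbound : ∀ n, 1 ≤ n → ∀ᵐ y ∂ρ, birkhoffSum T (q + a) n y + ℓ n y ≤ U y) :
    ∫ y, q y ∂ρ + ∫ y, a y ∂ρ ≤ h := by
  set m := ∫ z, a z ∂ρ
  have int_sum (n : ℕ) := integrable_birkhoffSum hT (hq.add ha) n
  have int_avg (n : ℕ) : Integrable (fun y => birkhoffAverage ℝ T a n y - m) ρ :=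
    ((integrable_birkhoffSum hT ha n).smul (n : ℝ)⁻¹).sub (integrable_const m)
  have avg_le_div (n : ℕ) : ∀ᵐ y ∂ρ,
      (n : ℝ)⁻¹ * (birkhoffSum T (q + a) n y + ℓ n y) ≤ U y / n := by
    rcases n.eq_zero_or_pos with rfl | hn
    · simp
    filter_upwards [hbound n hn] with y hy
    rw [inv_mul_eq_div]
    gcongr
  have avg_le_const (n : ℕ) (y : α) :
      (n : ℝ)⁻¹ * (birkhoffSum T (q + a) n y + ℓ n y) ≤
        (1 + m) + (birkhoffAverage ℝ T a n y - m) := by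
    have sum_q_le : birkhoffSum T q n y ≤ n :=
      (Finset.sum_le_card_nsmul _ _ 1 fun k _ => hq1 _).trans (by simp)
    calc (n : ℝ)⁻¹ * (birkhoffSum T (q + a) n y + ℓ n y)
        ≤ (n : ℝ)⁻¹ * (n + birkhoffSum T a n y + 0) := by
          rw [birkhoffSum_add']
          gcongr
          exact hℓ0 n y
      _ = (n : ℝ)⁻¹ * n + birkhoffAverage ℝ T a n y := by
        rw [birkhoffAverage, smul_eq_mul]
        ring
      _ ≤ (1 + m) + (birkhoffAverage ℝ T a n y - m) := by
        linarith [inv_mul_le_one (a := (n : ℝ))]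
  have lim : Tendsto (fun n : ℕ => ∫ y, (n : ℝ)⁻¹ * (birkhoffSum T (q + a) n y + ℓ n y) ∂ρ) atTop
      (nhds (∫ y, q y ∂ρ + m + -h)) := by
    refine (hh.const_add (∫ y, q y ∂ρ + m)).congr' ?_
    filter_upwards [eventually_ne_atTop 0] with n hn
    rw [integral_const_mul, integral_add (int_sum n) (hℓ n), integral_birkhoffSum hT (hq.add ha),
      integral_add' hq ha, mul_add, inv_mul_cancel_left₀ (Nat.cast_ne_zero.2 hn)]
  have nonpos := nonpos_of_tendsto_integral_of_le_div_nat
    (fun n => ((int_sum n).add (hℓ n)).const_mul (n : ℝ)⁻¹) int_avg hU avg_le_div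
    (fun n => ae_of_all _ (avg_le_const n)) hmean lim
  linarith

/-- The nonnegative defect of `a + f`, truncated at `1`, has integral at most `h - ∫ a ≤ 0`. -/
theorem birkhoffSup_eq_add_of_le_integral (hT : MeasurePreserving T ρ ρ) (ham : Measurable a)
    (ha : Integrable a ρ)
    (hmean : Tendsto (fun n => ∫ y, |birkhoffAverage ℝ T a n y - ∫ z, a z ∂ρ| ∂ρ) atTop (nhds 0))
    (hℓ : ∀ n, Integrable (ℓ n) ρ) (hℓ0 : ∀ n y, ℓ n y ≤ 0)
    (hh : Tendsto (fun n : ℕ => (n : ℝ)⁻¹ * ∫ y, ℓ n y ∂ρ) atTop (nhds (-h)))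
    {f C : α → ℝ} (hf : Measurable f) (hC : Measurable C)
    (hℓf : ∀ᵐ y ∂ρ, ∀ n, 1 ≤ n → ℓ n y ≤ C y + birkhoffSum T f n y)
    (hbdd : ∀ᵐ y ∂ρ, y ∈ birkhoffBounded T (a + f)) (hha : h ≤ ∫ y, a y ∂ρ) :
    ∀ᵐ y ∂ρ, birkhoffSup T (a + f) y = (a + f) y + birkhoffSup T (a + f) (T y) := by
  set q : α → ℝ := fun y => min (birkhoffDefect T (a + f) y) 1 with hq_def
  have q_nonneg : 0 ≤ᵐ[ρ] q := by
    filter_upwards [hbdd] with y hy using le_min (birkhoffDefect_nonneg hy) zero_le_one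
  have q_int : Integrable q ρ := by
    refine .of_bound ((measurable_birkhoffDefect hT.measurable (ham.add hf)).min
      measurable_const).aestronglyMeasurable 1 ?_
    filter_upwards [q_nonneg] with y hy
    rw [Real.norm_of_nonneg hy]
    exact min_le_right _ _
  have sum_le (n : ℕ) (hn : 1 ≤ n) : ∀ᵐ y ∂ρ,
      birkhoffSum T (q + a) n y + ℓ n y ≤ birkhoffSup T (a + f) y + C y := by
    filter_upwards [hℓf] with y hℓy
    have telescope := birkhoffSum_min_birkhoffDefect_add_le (T := T) (g := a + f) n y
    rw [birkhoffSum_add', ← hq_def] at telescope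
    rw [birkhoffSum_add']
    linarith [hℓy n hn]
  have integral_q := integral_add_integral_le_of_birkhoffSum_le hT ha hmean hℓ hℓ0 hh q_int
    (fun y => min_le_right _ _)
    ((measurable_birkhoffSup hT.measurable (ham.add hf)).add hC) sum_le
  have q_eq_zero : q =ᵐ[ρ] 0 := (integral_eq_zero_iff_of_nonneg_ae q_nonneg q_int).1
    (le_antisymm (by linarith) (integral_nonneg_of_ae q_nonneg))
  filter_upwards [q_eq_zero] with y hy
  have defect_eq_zero : birkhoffDefect T (a + f) y = 0 := by
    rcases min_choice (birkhoffDefect T (a + f) y) 1 with h_min | h_min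
    · exact h_min.symm.trans hy
    · exact absurd (h_min.symm.trans hy) one_ne_zero
  rw [birkhoffDefect] at defect_eq_zero
  linarith

end CohomologicalEquation

section Rigidity

lemma integral_pos_of_forall_pos {α : Type*} [MeasurableSpace α] {ρ : Measure α} [NeZero ρ]
    {F : α → ℝ} (hF : Integrable F ρ) (hpos : ∀ y, 0 < F y) : 0 < ∫ y, F y ∂ρ := by
  rw [integral_pos_iff_support_of_nonneg (fun y => (hpos y).le) hF,
    Function.support_eq_univ fun y => (hpos y).ne']
  exact NeZero.pos (ρ univ)

variable {E : Type*} [MeasurableSpace E] (μ : Measure E) [IsProbabilityMeasure μ] {φ : E → ℝ}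

lemma integral_eval_iidMeasure (hφ : Measurable φ) (k : ℕ) :
    ∫ ξ, φ (ξ k) ∂iidMeasure μ = ∫ a, φ a ∂μ :=
  (measurePreserving_eval_infinitePi (fun _ => μ) k).hasLaw.integral_comp hφ.aestronglyMeasurable

lemma tendsto_integral_abs_average_sub (hφ : Measurable φ) (hφi : Integrable φ μ) :
    Tendsto (fun n : ℕ => ∫ ξ, |(n : ℝ)⁻¹ • ∑ k ∈ Finset.range n, φ (ξ k) - ∫ a, φ a ∂μ|
      ∂iidMeasure μ) atTop (nhds 0) := by
  have eval_mp (k : ℕ) := measurePreserving_eval_infinitePi (fun _ : ℕ => μ) k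
  have ident (k : ℕ) : IdentDistrib (fun ξ : ℕ → E => φ (ξ k)) (fun ξ => φ (ξ 0))
      (iidMeasure μ) (iidMeasure μ) :=
    IdentDistrib.comp ⟨(eval_mp k).aemeasurable, (eval_mp 0).aemeasurable,
      (eval_mp k).map_eq.trans (eval_mp 0).map_eq.symm⟩ hφ
  have int_eval (k : ℕ) : Integrable (fun ξ : ℕ → E => φ (ξ k)) (iidMeasure μ) :=
    (eval_mp k).integrable_comp_of_integrable hφi
  have lln := strong_law_Lp le_rfl ENNReal.one_ne_top (fun k (ξ : ℕ → E) => φ (ξ k))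
    (memLp_one_iff_integrable.2 (int_eval 0))
    (fun i j hij => ((iIndepFun_eval_iidMeasure μ).indepFun hij).comp hφ hφ) ident
  rw [integral_eval_iidMeasure μ hφ] at lln
  refine ((ENNReal.tendsto_toReal ENNReal.zero_ne_top).comp lln).congr fun n => ?_
  have int_avg : Integrable
      (fun ξ => (n : ℝ)⁻¹ • ∑ k ∈ Finset.range n, φ (ξ k) - ∫ a, φ a ∂μ) (iidMeasure μ) :=
    ((integrable_finsetSum _ fun k _ => int_eval k).smul (n : ℝ)⁻¹).sub (integrable_const _)
  rw [Function.comp_apply, eLpNorm_one_eq_lintegral_enorm,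
    ← integral_norm_eq_lintegral_enorm int_avg.aestronglyMeasurable]
  rfl

lemma sq_integral_le_integral_sq {w : E → ℝ} (hw : MemLp w 2 μ) :
    (∫ a, w a ∂μ) ^ 2 ≤ ∫ a, w a ^ 2 ∂μ := by
  have var := variance_nonneg w μ
  rw [variance_eq_sub hw] at var
  exact sub_nonneg.1 var

lemma ae_eq_const_of_sq_integral_eq {w : E → ℝ} (hw : MemLp w 2 μ)
    (heq : (∫ a, w a ∂μ) ^ 2 = ∫ a, w a ^ 2 ∂μ) : w =ᵐ[μ] fun _ => ∫ a, w a ∂μ := by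
  have var : variance w μ = 0 := by
    rw [variance_eq_sub hw, sub_eq_zero]
    exact heq.symm
  rw [← evariance_eq_zero_iff hw.aestronglyMeasurable.aemeasurable, ← hw.ofReal_variance_eq, var,
    ENNReal.ofReal_zero]

variable {S : Type*} [MeasurableSpace S] {T : S → S} {ν : Measure S}

lemma tendsto_integral_abs_birkhoffAverage_sub [IsProbabilityMeasure ν] (hφ : Measurable φ)
    (hφi : Integrable φ μ) :
    Tendsto (fun n => ∫ y, |birkhoffAverage ℝ (Prod.map T tailSeq)
      (fun z : S × (ℕ → E) => φ (z.2 0)) n y - ∫ z, φ (z.2 0) ∂ν.prod (iidMeasure μ)|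
      ∂ν.prod (iidMeasure μ)) atTop (nhds 0) := by
  have sum_eq (n : ℕ) (y : S × (ℕ → E)) : birkhoffAverage ℝ (Prod.map T tailSeq)
      (fun z : S × (ℕ → E) => φ (z.2 0)) n y =
        (n : ℝ)⁻¹ • ∑ k ∈ Finset.range n, φ (y.2 k) := by
    simp [birkhoffAverage, birkhoffSum, Prod.map_iterate, tailSeq_iterate_apply]
  have project {F : (ℕ → E) → ℝ} (hF : Measurable F) :
      ∫ y, F y.2 ∂ν.prod (iidMeasure μ) = ∫ ξ, F ξ ∂iidMeasure μ :=
    measurePreserving_snd.hasLaw.integral_comp hF.aestronglyMeasurable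
  refine (tendsto_integral_abs_average_sub μ hφ hφi).congr fun n => ?_
  rw [project (F := fun ξ => φ (ξ 0)) (by fun_prop), integral_eval_iidMeasure μ hφ]
  simp only [sum_eq]
  refine (project (F := fun ξ => |(n : ℝ)⁻¹ • ∑ k ∈ Finset.range n, φ (ξ k) - ∫ a, φ a ∂μ|)
    ?_).symm
  fun_prop

variable {V : S × (ℕ → E) → ℝ} {w : E → ℝ} {c : S → ℝ}

lemma ae_integral_pow_eq_of_mul_coboundary (hV : Measurable V) (hw : Measurable w)
    (heq : ∀ᵐ y ∂ν.prod (iidMeasure μ), V y = c y.1 * w (y.2 0) * V (Prod.map T tailSeq y))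
    (j : ℕ) : ∀ᵐ x ∂ν, ∫ ξ, V (x, ξ) ^ j ∂iidMeasure μ =
      c x ^ j * (∫ a, w a ^ j ∂μ) * ∫ ξ, V (T x, ξ) ^ j ∂iidMeasure μ := by
  filter_upwards [Measure.ae_ae_of_ae_prod heq] with x hx
  calc ∫ ξ, V (x, ξ) ^ j ∂iidMeasure μ
      = ∫ ξ, c x ^ j * (w (ξ 0) ^ j * V (T x, tailSeq ξ) ^ j) ∂iidMeasure μ := by
        refine integral_congr_ae ?_
        filter_upwards [hx] with ξ hξ
        rw [hξ, mul_pow, mul_pow, mul_assoc]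
        rfl
    _ = c x ^ j * (∫ a, w a ^ j ∂μ) * ∫ ξ, V (T x, ξ) ^ j ∂iidMeasure μ := by
      rw [integral_const_mul, mul_assoc, integral_eval_zero_mul_tailSeq μ (hw.pow_const j)
        (H := fun ξ => V (T x, ξ) ^ j) ((hV.comp measurable_prodMk_left).pow_const j)]

lemma eq_one_of_ae_eq_const_mul_comp [IsFiniteMeasure ν] [NeZero ν]
    (hT : MeasurePreserving T ν ν) {R : S → ℝ} (hR : Measurable R) (hR0 : ∀ x, 0 < R x)
    (hR1 : ∀ x, R x ≤ 1) {r : ℝ}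
    (heq : ∀ᵐ x ∂ν, R x = r * R (T x)) : r = 1 := by
  have hRi : Integrable R ν := .of_bound hR.aestronglyMeasurable 1 (ae_of_all _ fun x => by
    rw [Real.norm_of_nonneg (hR0 x).le]; exact hR1 x)
  have pos : 0 < ∫ x, R x ∂ν := integral_pos_of_forall_pos hRi hR0
  have invariant : ∫ x, R (T x) ∂ν = ∫ x, R x ∂ν := hT.hasLaw.integral_comp hR.aestronglyMeasurable
  have scaled := integral_congr_ae heq
  rw [integral_const_mul, invariant] at scaled
  exact (mul_eq_right₀ pos.ne').1 scaled.symm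

/-- The ratio `(∫ V(x, ξ) dξ)² / ∫ V(x, ξ)² dξ` is multiplied by `(∫ w² dμ) / (∫ w dμ)²` along
`T`, although its integral is `T`-invariant. -/
theorem ae_eq_const_of_mul_coboundary [IsProbabilityMeasure ν] (hT : MeasurePreserving T ν ν)
    (hV : Measurable V) (hV0 : ∀ y, 0 < V y) (hV1 : ∀ y, V y ≤ 1) (hw : Measurable w)
    (heq : ∀ᵐ y ∂ν.prod (iidMeasure μ), V y = c y.1 * w (y.2 0) * V (Prod.map T tailSeq y)) :
    w =ᵐ[μ] fun _ => ∫ a, w a ∂μ := by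
  have memLp_V (x : S) : MemLp (fun ξ => V (x, ξ)) 2 (iidMeasure μ) :=
    .of_bound (hV.comp measurable_prodMk_left).aestronglyMeasurable 1 (ae_of_all _ fun ξ => by
      rw [Real.norm_of_nonneg (hV0 _).le]; exact hV1 _)
  set M : ℕ → S → ℝ := fun j x => ∫ ξ, V (x, ξ) ^ j ∂iidMeasure μ with hM
  have M1_eq (x : S) : M 1 x = ∫ ξ, V (x, ξ) ∂iidMeasure μ := by simp only [hM, pow_one]
  have M1_pos (x : S) : 0 < M 1 x :=
    M1_eq x ▸ integral_pos_of_forall_pos ((memLp_V x).integrable one_le_two) fun ξ => hV0 _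
  have M2_pos (x : S) : 0 < M 2 x :=
    integral_pos_of_forall_pos (memLp_V x).integrable_sq fun ξ => pow_pos (hV0 _) 2
  have ratio_le_one (x : S) : M 1 x ^ 2 / M 2 x ≤ 1 :=
    div_le_one_of_le₀ (M1_eq x ▸ sq_integral_le_integral_sq _ (memLp_V x)) (M2_pos x).le
  have M_meas (j : ℕ) : Measurable (M j) :=
    (hV.pow_const j).stronglyMeasurable.integral_prod_right'.measurable
  have M1_step := ae_integral_pow_eq_of_mul_coboundary μ hV hw heq 1
  have M2_step := ae_integral_pow_eq_of_mul_coboundary μ hV hw heq 2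
  simp only [pow_one (w _)] at M1_step
  have w_sq_ne_zero : ∫ a, w a ^ 2 ∂μ ≠ 0 := by
    obtain ⟨x, hx⟩ := M2_step.exists
    intro h0
    rw [h0, mul_zero, zero_mul] at hx
    exact (M2_pos x).ne' hx
  have memLp_w : MemLp w 2 μ := (memLp_two_iff_integrable_sq hw.aestronglyMeasurable).2
    (.of_integral_ne_zero w_sq_ne_zero)
  have ratio_step : ∀ᵐ x ∂ν, M 1 x ^ 2 / M 2 x =
      (∫ a, w a ∂μ) ^ 2 / (∫ a, w a ^ 2 ∂μ) * (M 1 (T x) ^ 2 / M 2 (T x)) := by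
    filter_upwards [M1_step, M2_step] with x h1 h2
    change M 1 x = c x ^ 1 * _ * M 1 (T x) at h1
    change M 2 x = c x ^ 2 * _ * M 2 (T x) at h2
    have c_ne_zero : c x ≠ 0 := by
      rintro h0
      exact (M2_pos x).ne' (by rw [h2, h0]; simp)
    rw [h1, h2]
    field_simp [(M2_pos (T x)).ne']
  have ratio_eq_one := eq_one_of_ae_eq_const_mul_comp hT
    (((M_meas 1).pow_const 2).div (M_meas 2)) (fun x => div_pos (pow_pos (M1_pos x) 2) (M2_pos x))
    ratio_le_one ratio_step
  exact ae_eq_const_of_sq_integral_eq μ memLp_w ((div_eq_one_iff_eq w_sq_ne_zero).1 ratio_eq_one)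

lemma ae_eq_const_of_add_coboundary [IsProbabilityMeasure ν] (hT : MeasurePreserving T ν ν)
    (hφ : Measurable φ) {U : S × (ℕ → E) → ℝ} (hU : Measurable U) (hU0 : ∀ y, 0 ≤ U y) {f : S → ℝ}
    (heq : ∀ᵐ y ∂ν.prod (iidMeasure μ), U y = φ (y.2 0) + f y.1 + U (Prod.map T tailSeq y)) :
    ∃ k, φ =ᵐ[μ] fun _ => k := by
  have w_const := ae_eq_const_of_mul_coboundary μ hT (V := fun y => Real.exp (-(U y / 2)))
    (c := fun x => Real.exp (-(f x / 2))) (w := fun a => Real.exp (-(φ a / 2)))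
    (hU.div_const 2).neg.exp (fun y => Real.exp_pos _)
    (fun y => Real.exp_le_one_iff.2 (by linarith [hU0 y])) (hφ.div_const 2).neg.exp ?_
  · refine ⟨-Real.log (∫ a, Real.exp (-(φ a / 2)) ∂μ) * 2, ?_⟩
    filter_upwards [w_const] with a ha
    rw [← ha, Real.log_exp]
    ring
  · filter_upwards [heq] with y hy
    rw [hy, ← Real.exp_add, ← Real.exp_add]
    ring_nf

/-- If the sums were bounded, `φ (ξ 0) + f x` would be a coboundary. -/
theorem ae_notMem_birkhoffBounded [IsProbabilityMeasure ν] (hT : Ergodic T ν)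
    (hφ : Measurable φ) (hφi : Integrable φ μ) (hφc : ¬ ∃ k, φ =ᵐ[μ] fun _ => k)
    {ℓ : ℕ → S → ℝ} (hℓ : ∀ n, Integrable (ℓ n) ν) (hℓ0 : ∀ n x, ℓ n x ≤ 0) {h : ℝ}
    (hh : Tendsto (fun n : ℕ => (n : ℝ)⁻¹ * ∫ x, ℓ n x ∂ν) atTop (nhds (-h)))
    {f C : S → ℝ} (hf : Measurable f) (hC : Measurable C)
    (hℓf : ∀ᵐ x ∂ν, ∀ n, 1 ≤ n → ℓ n x ≤ C x + birkhoffSum T f n x)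
    (hhφ : h ≤ ∫ a, φ a ∂μ) :
    ∀ᵐ y ∂ν.prod (iidMeasure μ), y ∉ birkhoffBounded (Prod.map T tailSeq)
      ((fun y => φ (y.2 0)) + fun y => f y.1) := by
  have skew := ergodic_prodMap_tailSeq μ hT
  have fst_mp : MeasurePreserving (Prod.fst : S × (ℕ → E) → S) (ν.prod (iidMeasure μ)) ν :=
    measurePreserving_fst
  have snd_mp : MeasurePreserving (fun y : S × (ℕ → E) => y.2 0) (ν.prod (iidMeasure μ)) μ :=
    (measurePreserving_eval_infinitePi (fun _ => μ) 0).comp measurePreserving_snd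
  have φ_meas : Measurable fun y : S × (ℕ → E) => φ (y.2 0) := by fun_prop
  have f_meas : Measurable fun y : S × (ℕ → E) => f y.1 := by fun_prop
  have mean_ℓ (n : ℕ) : ∫ y, ℓ n y.1 ∂ν.prod (iidMeasure μ) = ∫ x, ℓ n x ∂ν :=
    fst_mp.hasLaw.integral_comp (hℓ n).aestronglyMeasurable
  have mean_φ : ∫ y, φ (y.2 0) ∂ν.prod (iidMeasure μ) = ∫ a, φ a ∂μ :=
    snd_mp.hasLaw.integral_comp hφ.aestronglyMeasurable
  have ℓ_le : ∀ᵐ y ∂ν.prod (iidMeasure μ), ∀ n, 1 ≤ n → ℓ n y.1 ≤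
      C y.1 + birkhoffSum (Prod.map T tailSeq) (fun z => f z.1) n y := by
    filter_upwards [fst_mp.quasiMeasurePreserving.ae hℓf] with y hy n hn
    exact (hy n hn).trans_eq (by simp [birkhoffSum, Prod.map_iterate])
  refine (ae_mem_or_ae_notMem_birkhoffBounded skew (φ_meas.add f_meas)).resolve_left fun hbdd => ?_
  have coboundary := birkhoffSup_eq_add_of_le_integral skew.toMeasurePreserving φ_meas
    (snd_mp.integrable_comp_of_integrable hφi) (tendsto_integral_abs_birkhoffAverage_sub μ hφ hφi)
    (fun n => fst_mp.integrable_comp_of_integrable (hℓ n)) (fun n y => hℓ0 n y.1)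
    (by simpa only [Function.comp_apply, mean_ℓ] using hh) f_meas (hC.comp measurable_fst) ℓ_le hbdd
    (hhφ.trans_eq mean_φ.symm)
  exact hφc (ae_eq_const_of_add_coboundary μ hT.toMeasurePreserving hφ
    (measurable_birkhoffSup skew.measurable (φ_meas.add f_meas)) birkhoffSup_nonneg coboundary)

end Rigidity

section Cylinders

variable {b : ℕ}

lemma restrict_eq_iff_mem_cylinder_ofFn {n : ℕ} (u : Fin n → Fin b) (x : SymbSpace b) :
    (fun i : Fin n => x i) = u ↔ x ∈ cylinder (List.ofFn u) := by
  simp only [_root_.cylinder, mem_ofPred_eq, List.get_ofFn, funext_iff]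
  exact ⟨fun h i => h (i.cast List.length_ofFn),
    fun h i => by simpa using h (i.cast List.length_ofFn.symm)⟩

lemma wordPrefix_succ (x : SymbSpace b) (n : ℕ) :
    wordPrefix x (n + 1) = wordPrefix x n ++ [x n] := by
  rw [wordPrefix, List.ofFn_succ', List.concat_eq_append]
  rfl

lemma length_wordPrefix (x : SymbSpace b) (n : ℕ) : (wordPrefix x n).length = n :=
  List.length_ofFn

lemma measurable_comp_wordPrefix {β : Type*} [MeasurableSpace β] (F : List (Fin b) → β) (n : ℕ) :
    Measurable fun x : SymbSpace b => F (wordPrefix x n) :=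
  (measurable_of_finite fun u : Fin n → Fin b => F (List.ofFn u)).comp
    (measurable_pi_lambda _ fun i => measurable_pi_apply i.1)

variable (ν : Measure (SymbSpace b)) [IsProbabilityMeasure ν]

lemma integrable_comp_wordPrefix (F : List (Fin b) → ℝ) (n : ℕ) :
    Integrable (fun x => F (wordPrefix x n)) ν := by
  obtain ⟨M, hM⟩ := (Set.finite_range fun u : Fin n → Fin b => ‖F (List.ofFn u)‖).bddAbove
  exact .of_bound (measurable_comp_wordPrefix F n).aestronglyMeasurable M
    (ae_of_all _ fun x => hM ⟨fun i => x i, rfl⟩)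

lemma integral_comp_wordPrefix (F : List (Fin b) → ℝ) (n : ℕ) :
    ∫ x, F (wordPrefix x n) ∂ν =
      ∑ u : Fin n → Fin b, F (List.ofFn u) * (ν (cylinder (List.ofFn u))).toReal := by
  have prefix_meas : Measurable fun (x : SymbSpace b) (i : Fin n) => x i :=
    measurable_pi_lambda _ fun i => measurable_pi_apply i.1
  have : IsProbabilityMeasure (ν.map fun x (i : Fin n) => x i) :=
    Measure.isProbabilityMeasure_map prefix_meas.aemeasurable
  calc ∫ x, F (wordPrefix x n) ∂ν
      = ∫ u, F (List.ofFn u) ∂ν.map fun x (i : Fin n) => x i :=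
        (integral_map prefix_meas.aemeasurable
          (measurable_of_finite fun u : Fin n → Fin b => F (List.ofFn u)).aestronglyMeasurable).symm
    _ = ∑ u : Fin n → Fin b, F (List.ofFn u) * (ν (cylinder (List.ofFn u))).toReal := by
      rw [integral_fintype .of_finite]
      refine Finset.sum_congr rfl fun u _ => ?_
      have preimage_eq : (fun (x : SymbSpace b) (i : Fin n) => x i) ⁻¹' {u} =
          cylinder (List.ofFn u) := ext (restrict_eq_iff_mem_cylinder_ofFn u)
      rw [Measure.real, Measure.map_apply prefix_meas (measurableSet_singleton u), preimage_eq,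
        smul_eq_mul, mul_comm]

lemma cylinder_toReal_le_one (w : List (Fin b)) : (ν (cylinder w)).toReal ≤ 1 :=
  ENNReal.toReal_le_of_le_ofReal zero_le_one (by simpa using prob_le_one)

lemma log_cylinder_nonpos (w : List (Fin b)) : Real.log (ν (cylinder w)).toReal ≤ 0 :=
  Real.log_nonpos ENNReal.toReal_nonneg (cylinder_toReal_le_one ν w)

lemma inv_mul_integral_log_cylinder (n : ℕ) :
    (n : ℝ)⁻¹ * ∫ x, Real.log (ν (cylinder (wordPrefix x n))).toReal ∂ν = -entropySeq ν n := by
  rw [integral_comp_wordPrefix ν (fun w => Real.log (ν (cylinder w)).toReal), entropySeq,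
    Finset.sum_neg_distrib, mul_neg, neg_neg]
  simp only [mul_comm]

lemma entropySeq_nonneg (n : ℕ) : 0 ≤ entropySeq ν n := by
  rw [← neg_nonpos, ← inv_mul_integral_log_cylinder]
  exact mul_nonpos_of_nonneg_of_nonpos (by positivity)
    (integral_nonpos fun x => log_cylinder_nonpos ν _)

end Cylinders

section CascadeMartingale

variable {b : ℕ} {Ω : Type*} {X : List (Fin b) → Ω → ℝ}

lemma cascadeY_append_singleton (w : List (Fin b)) (a : Fin b) (ω : Ω) :
    cascadeY X (w ++ [a]) ω = cascadeY X w ω * X (w ++ [a]) ω := by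
  rw [cascadeY, List.length_append, List.length_singleton, Finset.prod_range_succ]
  congr 1
  · refine Finset.prod_congr rfl fun k hk => ?_
    rw [List.take_append_of_le_length (Finset.mem_range.1 hk)]
  · rw [List.take_of_length_le (by simp)]

lemma take_succ_ne_nil {w : List (Fin b)} {k : ℕ} (hk : k ∈ Finset.range w.length) :
    w.take (k + 1) ≠ [] := by
  simpa using List.ne_nil_of_length_pos ((Nat.zero_le k).trans_lt (Finset.mem_range.1 hk))

lemma cascadeZ_eq_integral (ν : Measure (SymbSpace b)) [IsProbabilityMeasure ν] (n : ℕ) (ω : Ω) :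
    cascadeZ X ν n ω = ∫ x, cascadeY X (wordPrefix x n) ω ∂ν :=
  (integral_comp_wordPrefix ν (fun w => cascadeY X w ω) n).symm

variable [MeasurableSpace Ω]

/-- The natural filtration of the cascade: at time `n` the weights of the words of length at most
`n` are known. -/
def cascadeFiltration (hX : ∀ w, Measurable (X w)) : Filtration ℕ ‹MeasurableSpace Ω› where
  seq n := ⨆ w ∈ {w : {w : List (Fin b) // w ≠ []} | w.1.length ≤ n},
    MeasurableSpace.comap (X w.1) inferInstance
  mono' _ _ hmn := biSup_mono fun _ hw => le_trans hw hmn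
  le' _ := iSup₂_le fun w _ => (hX w.1).comap_le

lemma measurable_weight_cascadeFiltration (hX : ∀ w, Measurable (X w)) {w : List (Fin b)}
    (hw : w ≠ []) {n : ℕ} (hn : w.length ≤ n) : Measurable[cascadeFiltration hX n] (X w) :=
  measurable_iff_comap_le.2
    (le_iSup₂_of_le (f := fun (w : {w : List (Fin b) // w ≠ []}) _ =>
      MeasurableSpace.comap (X w.1) inferInstance) ⟨w, hw⟩ hn le_rfl)

lemma measurable_cascadeY_cascadeFiltration (hX : ∀ w, Measurable (X w)) (w : List (Fin b))
    {n : ℕ} (hn : w.length ≤ n) : Measurable[cascadeFiltration hX n] (cascadeY X w) :=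
  Finset.measurable_prod _ fun _ hk => measurable_weight_cascadeFiltration hX
    (take_succ_ne_nil hk) ((List.length_take_le' _ _).trans hn)

variable {P : Measure Ω} {X₀ : Ω → ℝ}

lemma cascadeY_nonneg (hM1 : CascadeM1 P X X₀) (w : List (Fin b)) (ω : Ω) : 0 ≤ cascadeY X w ω :=
  Finset.prod_nonneg fun _ _ => hM1.nonneg _ _

lemma cascadeZ_nonneg (hM1 : CascadeM1 P X X₀) (ν : Measure (SymbSpace b)) (n : ℕ) (ω : Ω) :
    0 ≤ cascadeZ X ν n ω :=
  Finset.sum_nonneg fun _ _ => mul_nonneg (cascadeY_nonneg hM1 _ _) ENNReal.toReal_nonneg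

lemma integrable_weight (hM1 : CascadeM1 P X X₀) {w : List (Fin b)} (hw : w ≠ []) :
    Integrable (X w) P :=
  (hM1.ident w hw).integrable_iff.2 (.of_integral_ne_zero (by simp [hM1.mean₀]))

lemma indep_iSup_weight_cascadeFiltration (hM1 : CascadeM1 P X X₀) {n : ℕ}
    {W : Set {w : List (Fin b) // w ≠ []}} (hW : ∀ w ∈ W, n < w.1.length) :
    Indep (⨆ w ∈ W, MeasurableSpace.comap (X w.1) inferInstance)
      (cascadeFiltration hM1.meas n) P :=
  indep_iSup_of_disjoint
    (m := fun w : {w : List (Fin b) // w ≠ []} => MeasurableSpace.comap (X w.1) inferInstance)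
    (fun w => (hM1.meas w.1).comap_le) hM1.indep
    (disjoint_left.2 fun w hw hle => (hW w hw).not_ge hle)

lemma indep_weight_cascadeFiltration (hM1 : CascadeM1 P X X₀) {w : List (Fin b)}
    (hw : w ≠ []) {n : ℕ} (hn : n < w.length) :
    Indep (MeasurableSpace.comap (X w) inferInstance) (cascadeFiltration hM1.meas n) P := by
  simpa only [iSup_singleton] using
    indep_iSup_weight_cascadeFiltration hM1 (W := {⟨w, hw⟩}) (by simpa using hn)

variable [IsProbabilityMeasure P]

lemma integrable_cascadeY (hM1 : CascadeM1 P X X₀) (w : List (Fin b)) :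
    Integrable (cascadeY X w) P := by
  induction w using List.reverseRecOn with
  | nil => exact integrable_const 1
  | append_singleton w a ih =>
    have eq_mul : cascadeY X (w ++ [a]) = cascadeY X w * X (w ++ [a]) :=
      funext (cascadeY_append_singleton w a)
    have indep : IndepFun (cascadeY X w) (X (w ++ [a])) P :=
      (indep_of_indep_of_le_right
        (indep_weight_cascadeFiltration hM1 (by simp) (by simp : w.length < (w ++ [a]).length))
        (measurable_cascadeY_cascadeFiltration hM1.meas w le_rfl).comap_le).symm
    rw [eq_mul]
    exact indep.integrable_mul ih (integrable_weight hM1 (by simp))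

lemma condExp_cascadeY (hM1 : CascadeM1 P X X₀) {w : List (Fin b)} {n : ℕ}
    (hw : w.length = n + 1) :
    P[cascadeY X w | cascadeFiltration hM1.meas n] =ᵐ[P] cascadeY X w.dropLast := by
  have hne : w ≠ [] := List.ne_nil_of_length_pos (by lia)
  have eq_mul : cascadeY X w = cascadeY X w.dropLast * X w := funext fun ω => by
    nth_rw 1 [← List.dropLast_append_getLast hne]
    rw [cascadeY_append_singleton, List.dropLast_append_getLast, Pi.mul_apply]
  have past := measurable_cascadeY_cascadeFiltration hM1.meas w.dropLast (n := n)
    (by rw [List.length_dropLast, hw]; rfl)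
  have mean : P[X w | cascadeFiltration hM1.meas n] =ᵐ[P] fun _ => 1 := by
    rw [← hM1.mean₀, ← (hM1.ident w hne).integral_eq]
    exact condExp_indep_eq (hM1.meas w).comap_le ((cascadeFiltration hM1.meas).le n)
      (comap_measurable (X w)).stronglyMeasurable
      (indep_weight_cascadeFiltration hM1 hne (by lia))
  have pull := condExp_mul_of_stronglyMeasurable_left past.stronglyMeasurable
    (eq_mul ▸ integrable_cascadeY hM1 w) (integrable_weight hM1 hne)
  rw [eq_mul]
  filter_upwards [pull, mean] with ω hpull hmean
  rw [hpull, Pi.mul_apply, hmean, mul_one]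

lemma integrable_cascadeZ (hM1 : CascadeM1 P X X₀) (ν : Measure (SymbSpace b)) (n : ℕ) :
    Integrable (cascadeZ X ν n) P :=
  integrable_finsetSum _ fun _ _ => (integrable_cascadeY hM1 _).mul_const _

lemma dropLast_wordPrefix_succ (x : SymbSpace b) (n : ℕ) :
    (wordPrefix x (n + 1)).dropLast = wordPrefix x n := by
  rw [wordPrefix_succ, List.dropLast_concat]

variable (ν : Measure (SymbSpace b)) [IsProbabilityMeasure ν]

theorem martingale_cascadeZ (hM1 : CascadeM1 P X X₀) :
    Martingale (cascadeZ X ν) (cascadeFiltration hM1.meas) P := by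
  refine martingale_nat (fun n => ?_) (integrable_cascadeZ hM1 ν) fun n => ?_
  · exact (Finset.measurable_sum _ fun u _ =>
      (measurable_cascadeY_cascadeFiltration hM1.meas _ (by simp)).mul_const _).stronglyMeasurable
  · have coarse_sum (ω : Ω) : cascadeZ X ν n ω = ∑ u : Fin (n + 1) → Fin b,
        cascadeY X (List.ofFn u).dropLast ω * (ν (cylinder (List.ofFn u))).toReal := by
      rw [cascadeZ_eq_integral, ← integral_comp_wordPrefix ν fun w => cascadeY X w.dropLast ω]
      simp only [dropLast_wordPrefix_succ]
    let mass (u : Fin (n + 1) → Fin b) : ℝ := (ν (cylinder (List.ofFn u))).toReal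
    have fine_sum : cascadeZ X ν (n + 1) = ∑ u, mass u • cascadeY X (List.ofFn u) := by
      funext ω
      simp [cascadeZ, mass, mul_comm]
    have condExp_sum := condExp_finsetSum (s := Finset.univ)
      (fun u _ => (integrable_cascadeY hM1 (List.ofFn u)).smul (mass u))
      (cascadeFiltration hM1.meas n)
    have condExp_term := ae_all_iff.2 fun u : Fin (n + 1) → Fin b =>
      (condExp_smul (mass u) (cascadeY X (List.ofFn u)) _).trans
        ((condExp_cascadeY hM1 (List.length_ofFn (f := u))).const_smul (mass u))
    rw [fine_sum]
    filter_upwards [condExp_sum, condExp_term] with ω hsum hterm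
    simp only [hsum, Finset.sum_apply, hterm, coarse_sum, Pi.smul_apply, smul_eq_mul, mul_comm,
      mass]

lemma integral_cascadeZ (hM1 : CascadeM1 P X X₀) (n : ℕ) : ∫ ω, cascadeZ X ν n ω ∂P = 1 := by
  have cascadeZ_zero : cascadeZ X ν 0 = fun _ => 1 := by
    funext ω
    simp [cascadeZ_eq_integral, wordPrefix, cascadeY]
  have integral_eq :=
    (martingale_cascadeZ ν hM1).setIntegral_eq (Nat.zero_le n) MeasurableSet.univ
  simpa [cascadeZ_zero] using integral_eq.symm

lemma measure_exists_le_cascadeZ_le (hM1 : CascadeM1 P X X₀) {K : ℝ} (hK : 0 < K) (n : ℕ) :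
    P {ω | ∃ k ≤ n, K ≤ cascadeZ X ν k ω} ≤ (ENNReal.ofReal K)⁻¹ := by
  have doob := maximal_ineq (martingale_cascadeZ ν hM1).submartingale
    (fun k ω => cascadeZ_nonneg hM1 ν k ω) (ε := K.toNNReal) n
  have sup_iff (ω : Ω) : K ≤ (Finset.range (n + 1)).sup' Finset.nonempty_range_add_one
      (fun k => cascadeZ X ν k ω) ↔ ∃ k ≤ n, K ≤ cascadeZ X ν k ω := by
    simp only [Finset.le_sup'_iff, Finset.mem_range, Nat.lt_succ_iff]
  have integral_le : ∫ ω in {ω | K ≤ (Finset.range (n + 1)).sup' Finset.nonempty_range_add_one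
      (fun k => cascadeZ X ν k ω)}, cascadeZ X ν n ω ∂P ≤ 1 := by
    rw [← integral_cascadeZ ν hM1 n]
    exact setIntegral_le_integral (integrable_cascadeZ hM1 ν n)
      (ae_of_all _ fun ω => cascadeZ_nonneg hM1 ν n ω)
  rw [Real.coe_toNNReal K hK.le] at doob
  have := doob.trans (ENNReal.ofReal_le_one.2 integral_le)
  simp only [sup_iff] at this
  rwa [ENNReal.le_inv_iff_mul_le, mul_comm]

lemma ae_exists_tendsto_cascadeZ (hM1 : CascadeM1 P X X₀) :
    ∀ᵐ ω ∂P, ∃ z, Tendsto (fun n => cascadeZ X ν n ω) atTop (nhds z) := by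
  refine (martingale_cascadeZ ν hM1).submartingale.exists_ae_tendsto_of_bdd (R := 1) fun n => ?_
  simp only [eLpNorm_one_eq_lintegral_enorm, Real.enorm_of_nonneg (cascadeZ_nonneg hM1 ν n _)]
  rw [← ofReal_integral_eq_lintegral_ofReal (integrable_cascadeZ hM1 ν n)
    (ae_of_all _ (cascadeZ_nonneg hM1 ν n)), integral_cascadeZ ν hM1 n]
  simp

theorem ae_tendsto_cascadeZ_zero (hM1 : CascadeM1 P X X₀)
    (hprob : ∀ ε : ℝ, 0 < ε → Tendsto (fun n => P {ω | ε ≤ cascadeZ X ν n ω}) atTop (nhds 0)) :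
    ∀ᵐ ω ∂P, Tendsto (fun n => cascadeZ X ν n ω) atTop (nhds 0) := by
  have in_measure : TendstoInMeasure P (cascadeZ X ν) atTop fun _ => 0 := by
    simpa only [tendstoInMeasure_iff_norm, sub_zero, Real.norm_eq_abs,
      abs_of_nonneg (cascadeZ_nonneg hM1 ν _ _)] using hprob
  obtain ⟨φ, hφ, subseq_tendsto⟩ := in_measure.exists_seq_tendsto_ae
  filter_upwards [subseq_tendsto, ae_exists_tendsto_cascadeZ ν hM1] with ω hsub ⟨z, hz⟩
  rwa [tendsto_nhds_unique hsub (hz.comp hφ.tendsto_atTop)]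

end CascadeMartingale

section ChangeOfMeasure

variable {E : Type*} [MeasurableSpace E] (μ : Measure E) [IsProbabilityMeasure μ] {g : E → ℝ≥0∞}

lemma pi_withDensity {ι : Type*} [Fintype ι] (hg : Measurable g) [SigmaFinite (μ.withDensity g)] :
    Measure.pi (fun _ : ι => μ.withDensity g) =
      (Measure.pi fun _ : ι => μ).withDensity fun ξ => ∏ i, g (ξ i) := by
  refine Measure.pi_eq fun s hs => ?_
  have hgs (i : ι) : Measurable ((s i).indicator g) := hg.indicator (hs i)
  have indicator_prod (ξ : ι → E) : (univ.pi s).indicator (fun ξ => ∏ i, g (ξ i)) ξ =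
      ∏ i, (s i).indicator g (ξ i) := by
    by_cases hξ : ξ ∈ univ.pi s
    · simpa only [indicator_of_mem hξ] using
        Finset.prod_congr rfl fun i _ => (indicator_of_mem (hξ i trivial) g).symm
    · obtain ⟨i, hi⟩ : ∃ i, ξ i ∉ s i := by simpa using hξ
      rw [indicator_of_notMem hξ,
        Finset.prod_eq_zero (Finset.mem_univ i) (indicator_of_notMem hi g)]
  have indep : iIndepFun (fun (i : ι) (ξ : ι → E) => (s i).indicator g (ξ i))
      (Measure.pi fun _ => μ) := iIndepFun_pi fun i => (hgs i).aemeasurable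
  rw [withDensity_apply _ (.univ_pi hs), ← lintegral_indicator (.univ_pi hs),
    lintegral_congr indicator_prod, lintegral_prod_eq_prod_lintegral_of_indepFun _ _ indep
      fun i => (hgs i).comp (measurable_pi_apply i)]
  refine Finset.prod_congr rfl fun i _ => ?_
  rw [withDensity_apply _ (hs i), ← lintegral_indicator (hs i),
    (measurePreserving_eval _ i).lintegral_comp (hgs i)]

lemma setLIntegral_prod_iidMeasure (hg : Measurable g) [IsProbabilityMeasure (μ.withDensity g)]
    {n : ℕ} {A : Set (ℕ → E)}
    (hA : MeasurableSet[MeasurableSpace.comap (fun ξ (i : Fin n) => ξ i) MeasurableSpace.pi] A) :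
    ∫⁻ ξ in A, ∏ i ∈ Finset.range n, g (ξ i) ∂iidMeasure μ = iidMeasure (μ.withDensity g) A := by
  obtain ⟨B, hB, rfl⟩ := hA
  have hprod : Measurable fun ξ : Fin n → E => ∏ i, g (ξ i) := by fun_prop
  simp only [← Fin.prod_univ_eq_prod_range]
  rw [(measurePreserving_restrict_fin (μ.withDensity g) n).measure_preimage hB.nullMeasurableSet,
    pi_withDensity μ hg, withDensity_apply _ hB,
    (measurePreserving_restrict_fin μ n).setLIntegral_comp_preimage hB hprod]

end ChangeOfMeasure

section SizeBiasedPaths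

/-- The law with density `a ↦ a` with respect to `μ`: the law of a weight along a path chosen
according to the cascade itself; the negative half-line gets mass `0`. -/
abbrev sizeBiased (μ : Measure ℝ) : Measure ℝ := μ.withDensity ENNReal.ofReal

/-- The weights met along the infinite path `x`. -/
def pathWeights {b : ℕ} {Ω : Type*} (X : List (Fin b) → Ω → ℝ) (x : SymbSpace b) (ω : Ω) (k : ℕ) :
    ℝ :=
  X (wordPrefix x (k + 1)) ω

/-- The mass `ξ₀ ⋯ ξₙ₋₁ ν([x|ₙ])` carried by the `n`-th cylinder around `x` when the weights along
`x` are `ξ`. -/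
def pathMass {b : ℕ} (ν : Measure (SymbSpace b)) (n : ℕ) (y : SymbSpace b × (ℕ → ℝ)) : ℝ :=
  (∏ i ∈ Finset.range n, y.2 i) * (ν (cylinder (wordPrefix y.1 n))).toReal

variable {b : ℕ} {Ω : Type*} {X : List (Fin b) → Ω → ℝ}

lemma take_wordPrefix (x : SymbSpace b) {k n : ℕ} (h : k ≤ n) :
    (wordPrefix x n).take k = wordPrefix x k := by
  refine List.ext_getElem ?_ fun i _ _ => ?_
  · simpa [length_wordPrefix] using h
  · simp [wordPrefix]

lemma cascadeY_wordPrefix (x : SymbSpace b) (n : ℕ) (ω : Ω) :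
    cascadeY X (wordPrefix x n) ω = ∏ k ∈ Finset.range n, pathWeights X x ω k := by
  rw [cascadeY, length_wordPrefix]
  refine Finset.prod_congr rfl fun k hk => ?_
  rw [take_wordPrefix x (Finset.mem_range.1 hk), pathWeights]

lemma measurable_pathMass (ν : Measure (SymbSpace b)) (n : ℕ) : Measurable (pathMass ν n) := by
  refine .mul (by fun_prop) ?_
  exact (measurable_comp_wordPrefix (fun w => (ν (cylinder w)).toReal) n).comp measurable_fst

/-- The points and weight sequences whose path mass stays below `K` up to time `n`. -/
def lightPaths (ν : Measure (SymbSpace b)) (K : ℝ) (n : ℕ) : Set (SymbSpace b × (ℕ → ℝ)) :=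
  {y | ∀ k ≤ n, pathMass ν k y < K}

lemma measurableSet_lightPaths (ν : Measure (SymbSpace b)) (K : ℝ) (n : ℕ) :
    MeasurableSet (lightPaths ν K n) := by
  simp only [lightPaths, ofPred_forall]
  exact .iInter fun k => .iInter fun _ =>
    measurableSet_lt (measurable_pathMass ν k) measurable_const

lemma measurableSet_comap_lightPaths (ν : Measure (SymbSpace b)) (K : ℝ) (n : ℕ)
    (x : SymbSpace b) :
    MeasurableSet[MeasurableSpace.comap (fun (ξ : ℕ → ℝ) (i : Fin n) => ξ i) MeasurableSpace.pi]
      (Prod.mk x ⁻¹' lightPaths ν K n) := by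
  have coord {i : ℕ} (hi : i < n) : Measurable[MeasurableSpace.comap
      (fun (ξ : ℕ → ℝ) (i : Fin n) => ξ i) MeasurableSpace.pi] fun ξ : ℕ → ℝ => ξ i :=
    (measurable_pi_apply (⟨i, hi⟩ : Fin n)).comp
      (comap_measurable fun (ξ : ℕ → ℝ) (i : Fin n) => ξ i)
  have preimage_eq : Prod.mk x ⁻¹' lightPaths ν K n = ⋂ k ≤ n,
      {ξ | (∏ i ∈ Finset.range k, ξ i) * (ν (cylinder (wordPrefix x k))).toReal < K} := by
    ext ξ
    simp [lightPaths, pathMass]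
  rw [preimage_eq]
  refine .iInter fun k => .iInter fun hk => measurableSet_lt (.mul_const ?_ _) measurable_const
  exact Finset.measurable_prod _ fun i hi => coord ((Finset.mem_range.1 hi).trans_le hk)

variable [MeasurableSpace Ω] {P : Measure Ω} {X₀ : Ω → ℝ}

lemma measurable_uncurry_pathWeights (hX : ∀ w, Measurable (X w)) :
    Measurable fun z : SymbSpace b × Ω => pathWeights X z.1 z.2 := by
  refine measurable_pi_lambda _ fun k => ?_
  have words : Measurable fun z : (Fin (k + 1) → Fin b) × Ω => X (List.ofFn z.1) z.2 :=
    measurable_from_prod_countable_right fun u => hX (List.ofFn u)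
  exact words.comp (by fun_prop : Measurable fun z : SymbSpace b × Ω =>
    ((fun i : Fin (k + 1) => z.1 i), z.2))

lemma pathMass_le_cascadeZ (hM1 : CascadeM1 P X X₀) (ν : Measure (SymbSpace b))
    (x : SymbSpace b) (n : ℕ) (ω : Ω) :
    pathMass ν n (x, pathWeights X x ω) ≤ cascadeZ X ν n ω := by
  rw [pathMass, ← cascadeY_wordPrefix]
  exact Finset.single_le_sum (f := fun u : Fin n → Fin b =>
      cascadeY X (List.ofFn u) ω * (ν (cylinder (List.ofFn u))).toReal)
    (fun _ _ => mul_nonneg (cascadeY_nonneg hM1 _ _) ENNReal.toReal_nonneg)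
    (Finset.mem_univ fun i : Fin n => x i)

lemma isProbabilityMeasure_sizeBiased (hM1 : CascadeM1 P X X₀) :
    IsProbabilityMeasure (sizeBiased (P.map X₀)) := by
  refine ⟨?_⟩
  rw [sizeBiased, withDensity_apply _ .univ, Measure.restrict_univ,
    lintegral_map ENNReal.measurable_ofReal hM1.meas₀,
    ← ofReal_integral_eq_lintegral_ofReal (.of_integral_ne_zero (by simp [hM1.mean₀]))
      (ae_of_all _ hM1.nonneg₀), hM1.mean₀, ENNReal.ofReal_one]

lemma map_pathWeights (hM1 : CascadeM1 P X X₀) (x : SymbSpace b) :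
    P.map (pathWeights X x) = iidMeasure (P.map X₀) := by
  have prefix_ne (k : ℕ) : wordPrefix x (k + 1) ≠ [] := by simp [wordPrefix]
  have inj : Function.Injective fun k : ℕ =>
      (⟨wordPrefix x (k + 1), prefix_ne k⟩ : {w : List (Fin b) // w ≠ []}) := fun j k hjk => by
    simpa [length_wordPrefix] using congr_arg (fun w => w.1.length) hjk
  have joint_law := (hM1.indep.precomp inj).map_fun_eq_infinitePi_map fun k => hM1.meas _
  exact joint_law.trans
    (congr_arg Measure.infinitePi (funext fun k => (hM1.ident _ (prefix_ne k)).map_eq))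

variable [IsProbabilityMeasure P] (ν : Measure (SymbSpace b)) [IsProbabilityMeasure ν]
  [IsProbabilityMeasure (P.map X₀)] [IsProbabilityMeasure (sizeBiased (P.map X₀))]

/-- The many-to-one formula: the cascade picks a `ν`-random path with size-biased weights. -/
lemma lintegral_indicator_lightPaths (hM1 : CascadeM1 P X X₀) (K : ℝ) (n : ℕ) :
    ∫⁻ ω, ∫⁻ x, (lightPaths ν K n).indicator
        (fun y => ∏ i ∈ Finset.range n, ENNReal.ofReal (y.2 i)) (x, pathWeights X x ω) ∂ν ∂P =
      ν.prod (iidMeasure (sizeBiased (P.map X₀))) (lightPaths ν K n) := by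
  set H : SymbSpace b × (ℕ → ℝ) → ℝ≥0∞ := (lightPaths ν K n).indicator
    fun y => ∏ i ∈ Finset.range n, ENNReal.ofReal (y.2 i)
  have measurable_H : Measurable H := .indicator (by fun_prop) (measurableSet_lightPaths ν K n)
  have measurable_joint : Measurable fun z : Ω × SymbSpace b => H (z.2, pathWeights X z.2 z.1) :=
    measurable_H.comp (measurable_snd.prodMk
      ((measurable_uncurry_pathWeights hM1.meas).comp measurable_swap))
  rw [Measure.prod_apply (measurableSet_lightPaths ν K n),
    lintegral_lintegral_swap measurable_joint.aemeasurable]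
  refine lintegral_congr fun x => ?_
  calc ∫⁻ ω, H (x, pathWeights X x ω) ∂P
      = ∫⁻ ξ, H (x, ξ) ∂iidMeasure (P.map X₀) := by
        rw [← map_pathWeights hM1 x]
        exact (lintegral_map (measurable_H.comp measurable_prodMk_left)
          ((measurable_uncurry_pathWeights hM1.meas).comp measurable_prodMk_left)).symm
    _ = ∫⁻ ξ in Prod.mk x ⁻¹' lightPaths ν K n, ∏ i ∈ Finset.range n, ENNReal.ofReal (ξ i)
          ∂iidMeasure (P.map X₀) :=
        lintegral_indicator (measurable_prodMk_left (measurableSet_lightPaths ν K n)) _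
    _ = iidMeasure (sizeBiased (P.map X₀)) (Prod.mk x ⁻¹' lightPaths ν K n) :=
        setLIntegral_prod_iidMeasure _ ENNReal.measurable_ofReal
          (measurableSet_comap_lightPaths ν K n x)

lemma setLIntegral_cascadeZ_le (hM1 : CascadeM1 P X X₀) (K : ℝ) (n : ℕ) :
    ∫⁻ ω in {ω | ∀ k ≤ n, cascadeZ X ν k ω < K}, ENNReal.ofReal (cascadeZ X ν n ω) ∂P ≤
      ν.prod (iidMeasure (sizeBiased (P.map X₀))) (lightPaths ν K n) := by
  have measurable_Z (k : ℕ) : Measurable (cascadeZ X ν k) :=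
    ((martingale_cascadeZ ν hM1).stronglyMeasurable k).measurable.mono
      ((cascadeFiltration hM1.meas).le k) le_rfl
  have measurableSet_small : MeasurableSet {ω | ∀ k ≤ n, cascadeZ X ν k ω < K} := by
    simp only [ofPred_forall]
    exact .iInter fun k => .iInter fun _ => measurableSet_lt (measurable_Z k) measurable_const
  rw [← lintegral_indicator_lightPaths ν hM1 K n]
  refine (setLIntegral_mono' measurableSet_small fun ω hω => ?_).trans
    (setLIntegral_le_lintegral _ _)
  have light (x : SymbSpace b) : (x, pathWeights X x ω) ∈ lightPaths ν K n := fun k hk =>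
    (pathMass_le_cascadeZ hM1 ν x k ω).trans_lt (hω k hk)
  rw [cascadeZ_eq_integral, ofReal_integral_eq_lintegral_ofReal
    (integrable_comp_wordPrefix ν (fun w => cascadeY X w ω) n)
    (ae_of_all _ fun x => cascadeY_nonneg hM1 _ ω)]
  refine lintegral_mono fun x => ?_
  rw [indicator_of_mem (light x), cascadeY_wordPrefix]
  exact (ENNReal.ofReal_prod_of_nonneg fun k _ => hM1.nonneg _ ω).le

lemma measure_le_cascadeZ_le (hM1 : CascadeM1 P X X₀) {K ε : ℝ} (hK : 0 < K) (hε : 0 < ε) (n : ℕ) :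
    P {ω | ε ≤ cascadeZ X ν n ω} ≤ (ENNReal.ofReal K)⁻¹ +
      ν.prod (iidMeasure (sizeBiased (P.map X₀))) (lightPaths ν K n) / ENNReal.ofReal ε := by
  set small := {ω | ∀ k ≤ n, cascadeZ X ν k ω < K} with small_def
  have cover : {ω | ε ≤ cascadeZ X ν n ω} ⊆ {ω | ∃ k ≤ n, K ≤ cascadeZ X ν k ω} ∪
      {ω | ε ≤ cascadeZ X ν n ω} ∩ small := fun ω hω => by
    by_cases h : ω ∈ small
    · exact .inr ⟨hω, h⟩
    · exact .inl (by simpa [small_def] using h)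
  have markov : P ({ω | ε ≤ cascadeZ X ν n ω} ∩ small) ≤
      ν.prod (iidMeasure (sizeBiased (P.map X₀))) (lightPaths ν K n) / ENNReal.ofReal ε := by
    have level_eq : {ω | ε ≤ cascadeZ X ν n ω} =
        {ω | ENNReal.ofReal ε ≤ ENNReal.ofReal (cascadeZ X ν n ω)} := by
      simp only [ENNReal.ofReal_le_ofReal_iff (cascadeZ_nonneg hM1 ν n _)]
    rw [level_eq]
    refine (Measure.le_restrict_apply _ _).trans ((meas_ge_le_lintegral_div
      (integrable_cascadeZ hM1 ν n).aemeasurable.ennreal_ofReal.restrict (by simpa using hε)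
      ENNReal.ofReal_ne_top).trans ?_)
    gcongr
    exact setLIntegral_cascadeZ_le ν hM1 K n
  exact (measure_mono cover).trans ((measure_union_le _ _).trans
    (add_le_add (measure_exists_le_cascadeZ_le ν hM1 hK n) markov))

lemma tendsto_measure_lightPaths {μ : Measure ℝ} [IsProbabilityMeasure μ]
    (hpath : ∀ᵐ y ∂ν.prod (iidMeasure μ), ∀ K, ∃ n, K ≤ pathMass ν n y) (K : ℝ) :
    Tendsto (fun n => ν.prod (iidMeasure μ) (lightPaths ν K n)) atTop (nhds 0) := by
  have null : ν.prod (iidMeasure μ) (⋂ n, lightPaths ν K n) = 0 := by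
    refine measure_mono_null (fun y hy => ?_) (ae_iff.1 hpath)
    intro hheavy
    obtain ⟨n, hn⟩ := hheavy K
    exact (mem_iInter.1 hy n n le_rfl).not_ge hn
  rw [← null]
  exact tendsto_measure_iInter_atTop
    (fun n => (measurableSet_lightPaths ν K n).nullMeasurableSet)
    (fun m n hmn y hy k hk => hy k (hk.trans hmn)) ⟨0, measure_ne_top _ _⟩

theorem ae_tendsto_cascadeZ_zero_of_unbounded_pathMass (hM1 : CascadeM1 P X X₀)
    (hpath : ∀ᵐ y ∂ν.prod (iidMeasure (sizeBiased (P.map X₀))), ∀ K, ∃ n, K ≤ pathMass ν n y) :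
    ∀ᵐ ω ∂P, Tendsto (fun n => cascadeZ X ν n ω) atTop (nhds 0) := by
  refine ae_tendsto_cascadeZ_zero ν hM1 fun ε hε => ENNReal.tendsto_nhds_zero.2 fun δ hδ => ?_
  have doob_small : Tendsto (fun K : ℝ => (ENNReal.ofReal K)⁻¹) atTop (nhds 0) := by
    simpa using tendsto_inv_iff.2 ENNReal.tendsto_ofReal_atTop
  obtain ⟨K, hKδ, hK⟩ := ((doob_small.eventually_le_const (ENNReal.half_pos hδ.ne')).and
    (eventually_gt_atTop 0)).exists
  have light_small : Tendsto (fun n => ν.prod (iidMeasure (sizeBiased (P.map X₀)))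
      (lightPaths ν K n) / ENNReal.ofReal ε) atTop (nhds 0) := by
    simpa using ENNReal.Tendsto.div_const (tendsto_measure_lightPaths ν hpath K)
      (.inr (by simpa using hε))
  filter_upwards [light_small.eventually_le_const (ENNReal.half_pos hδ.ne')] with n hn
  calc P {ω | ε ≤ cascadeZ X ν n ω} ≤ _ := measure_le_cascadeZ_le ν hM1 hK hε n
    _ ≤ δ / 2 + δ / 2 := add_le_add hKδ hn
    _ = δ := ENNReal.add_halves δ

end SizeBiasedPaths

section SizeBiasedLogarithm

variable {Ω : Type*} [MeasurableSpace Ω] {P : Measure Ω} {X₀ : Ω → ℝ}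

lemma integrable_log_sizeBiased_iff (hX₀ : Measurable X₀) (h0 : ∀ ω, 0 ≤ X₀ ω) :
    Integrable Real.log (sizeBiased (P.map X₀)) ↔
      Integrable (fun ω => X₀ ω * Real.log (X₀ ω)) P := by
  rw [integrable_withDensity_iff_integrable_smul' ENNReal.measurable_ofReal (by simp),
    integrable_map_measure (by fun_prop) hX₀.aemeasurable]
  simp only [Function.comp_def, ENNReal.toReal_ofReal (h0 _), smul_eq_mul]

lemma integral_log_sizeBiased (hX₀ : Measurable X₀) (h0 : ∀ ω, 0 ≤ X₀ ω) :
    ∫ a, Real.log a ∂sizeBiased (P.map X₀) = ∫ ω, X₀ ω * Real.log (X₀ ω) ∂P := by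
  rw [integral_withDensity_eq_integral_toReal_smul ENNReal.measurable_ofReal (by simp),
    integral_map hX₀.aemeasurable (by fun_prop)]
  simp only [ENNReal.toReal_ofReal (h0 _), smul_eq_mul]

lemma integrable_mul_log_of_entropyX_ne_top [IsFiniteMeasure P] (hX₀ : Measurable X₀)
    (h0 : ∀ ω, 0 ≤ X₀ ω) (h : entropyX P X₀ ≠ ∞) :
    Integrable (fun ω => X₀ ω * Real.log (X₀ ω)) P := by
  have meas : Measurable fun ω => X₀ ω * Real.log (X₀ ω) := by fun_prop
  have neg_ne_top : ∫⁻ ω, ENNReal.ofReal (-(X₀ ω * Real.log (X₀ ω))) ∂P ≠ ∞ := by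
    refine ((lintegral_mono fun ω => ENNReal.ofReal_le_one.2 ?_).trans_lt
      (b := ∫⁻ _, 1 ∂P) (by simp)).ne
    linarith [Real.self_sub_one_le_mul_log (h0 ω), h0 ω]
  have pos_ne_top : ∫⁻ ω, ENNReal.ofReal (X₀ ω * Real.log (X₀ ω)) ∂P ≠ ∞ := fun htop =>
    h (by rw [entropyX, htop, ENNReal.top_sub neg_ne_top])
  refine ⟨meas.aestronglyMeasurable, hasFiniteIntegral_iff_enorm.2 ?_⟩
  refine (lintegral_mono fun ω => ?_).trans_lt
    ((lintegral_add_left meas.ennreal_ofReal _).trans_lt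
      (ENNReal.add_lt_top.2 ⟨pos_ne_top.lt_top, neg_ne_top.lt_top⟩))
  rw [Real.enorm_eq_ofReal_abs, abs_eq_max_neg, ENNReal.ofReal_max]
  exact max_le le_self_add le_add_self

lemma entropyX_eq_ofReal_integral (h : Integrable (fun ω => X₀ ω * Real.log (X₀ ω)) P) :
    entropyX P X₀ = ENNReal.ofReal (∫ ω, X₀ ω * Real.log (X₀ ω) ∂P) := by
  rw [integral_eq_lintegral_pos_part_sub_lintegral_neg_part h,
    ENNReal.ofReal_sub _ ENNReal.toReal_nonneg, ENNReal.ofReal_toReal h.lintegral_lt_top.ne,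
    ENNReal.ofReal_toReal (by exact h.neg.lintegral_lt_top.ne), entropyX]

lemma integral_mul_log_nonneg [IsProbabilityMeasure P] (h0 : ∀ ω, 0 ≤ X₀ ω)
    (hmean : ∫ ω, X₀ ω ∂P = 1) (h : Integrable (fun ω => X₀ ω * Real.log (X₀ ω)) P) :
    0 ≤ ∫ ω, X₀ ω * Real.log (X₀ ω) ∂P := by
  have hX₀ : Integrable X₀ P := .of_integral_ne_zero (by simp [hmean])
  calc 0 = ∫ ω, (X₀ ω - 1) ∂P := by simp [integral_sub hX₀ (integrable_const 1), hmean]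
    _ ≤ ∫ ω, X₀ ω * Real.log (X₀ ω) ∂P := integral_mono (hX₀.sub (integrable_const 1)) h
        fun ω => Real.self_sub_one_le_mul_log (h0 ω)

lemma integrable_log_sizeBiased_and_integral_eq [IsProbabilityMeasure P] (hX₀ : Measurable X₀)
    (h0 : ∀ ω, 0 ≤ X₀ ω) (hmean : ∫ ω, X₀ ω ∂P = 1) {h : ℝ} (hh : 0 ≤ h)
    (hcrit : entropyX P X₀ = ENNReal.ofReal h) :
    Integrable Real.log (sizeBiased (P.map X₀)) ∧
      ∫ a, Real.log a ∂sizeBiased (P.map X₀) = h := by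
  have int := integrable_mul_log_of_entropyX_ne_top hX₀ h0 (hcrit ▸ ENNReal.ofReal_ne_top)
  refine ⟨(integrable_log_sizeBiased_iff hX₀ h0).2 int, ?_⟩
  rw [integral_log_sizeBiased hX₀ h0, ← ENNReal.ofReal_eq_ofReal_iff
    (integral_mul_log_nonneg h0 hmean int) hh, ← entropyX_eq_ofReal_integral int, hcrit]

lemma ae_pos_sizeBiased (μ : Measure ℝ) : ∀ᵐ a ∂sizeBiased μ, 0 < a :=
  (ae_withDensity_iff ENNReal.measurable_ofReal).2 (ae_of_all _ fun a ha => by simpa using ha)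

lemma ae_eq_zero_or_eq_exp (hX₀ : Measurable X₀) (h0 : ∀ ω, 0 ≤ X₀ ω) {c : ℝ}
    (hc : Real.log =ᵐ[sizeBiased (P.map X₀)] fun _ => c) :
    ∀ᵐ ω ∂P, X₀ ω = 0 ∨ X₀ ω = Real.exp c := by
  filter_upwards [ae_of_ae_map hX₀.aemeasurable
    ((ae_withDensity_iff ENNReal.measurable_ofReal).1 hc)] with ω hω
  refine (h0 ω).eq_or_lt'.imp_right fun hpos => ?_
  rw [← hω (by simpa using hpos), Real.exp_log hpos]

lemma isQalphaCascade_of_ae_eq_zero_or_eq_exp [IsProbabilityMeasure P] (hX₀ : Measurable X₀)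
    (hmean : ∫ ω, X₀ ω ∂P = 1) {c : ℝ} (hval : ∀ᵐ ω ∂P, X₀ ω = 0 ∨ X₀ ω = Real.exp c) :
    IsQalphaCascade P X₀ c := by
  have meas : MeasurableSet {ω | X₀ ω = Real.exp c} := hX₀ (measurableSet_singleton _)
  have indicator_eq : X₀ =ᵐ[P] {ω | X₀ ω = Real.exp c}.indicator fun _ => Real.exp c := by
    filter_upwards [hval] with ω hω
    by_cases h : X₀ ω = Real.exp c
    · rw [indicator_of_mem (by exact h), h]
    · rw [indicator_of_notMem (by exact h), hω.resolve_right h]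
  have prob_exp : P {ω | X₀ ω = Real.exp c} = ENNReal.ofReal (Real.exp (-c)) := by
    rw [integral_congr_ae indicator_eq, integral_indicator_const _ meas, smul_eq_mul] at hmean
    rw [Real.exp_neg, ← eq_inv_of_mul_eq_one_left hmean, ofReal_measureReal]
  refine ⟨prob_exp, ?_⟩
  rw [← prob_exp, ← prob_compl_eq_one_sub meas]
  refine measure_congr ?_
  filter_upwards [hval] with ω hω
  refine propext (⟨fun hzero hexp => ?_, hω.resolve_right⟩ : X₀ ω = 0 ↔ ¬ X₀ ω = Real.exp c)
  exact (Real.exp_pos c).ne (hzero.symm.trans hexp)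

end SizeBiasedLogarithm

section GibbsPaths

variable {b : ℕ} {f : SymbSpace b → ℝ}

/-- The potential `log ξ₀ + f x`, whose Birkhoff sums under the skew shift are comparable to the
logarithms of the path masses when `ν` satisfies property (G) with potential `f`. -/
def pathPotential (f : SymbSpace b → ℝ) : SymbSpace b × (ℕ → ℝ) → ℝ :=
  (fun y => Real.log (y.2 0)) + fun y => f y.1

lemma birkhoffSum_pathPotential (n : ℕ) (y : SymbSpace b × (ℕ → ℝ)) :
    birkhoffSum (Prod.map (shiftMap b) tailSeq) (pathPotential f) n y =
      ∑ k ∈ Finset.range n, Real.log (y.2 k) + birkhoffSum (shiftMap b) f n y.1 := by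
  simp [birkhoffSum, pathPotential, Prod.map_iterate, tailSeq_iterate_apply,
    Finset.sum_add_distrib]

variable {ν : Measure (SymbSpace b)} {μ : Measure ℝ} [IsProbabilityMeasure μ]

lemma ae_iidMeasure {p : ℝ → Prop} (h : ∀ᵐ a ∂μ, p a) :
    ∀ᵐ ξ ∂iidMeasure μ, ∀ k, p (ξ k) :=
  ae_all_iff.2 fun k =>
    (measurePreserving_eval_infinitePi (fun _ : ℕ => μ) k).quasiMeasurePreserving.ae h

lemma ae_unbounded_pathMass_of_notMem_birkhoffBounded (hG : PropertyG ν f)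
    (hpos : ∀ᵐ a ∂μ, 0 < a) (hunbdd : ∀ᵐ y ∂ν.prod (iidMeasure μ),
      y ∉ birkhoffBounded (Prod.map (shiftMap b) tailSeq) (pathPotential f)) :
    ∀ᵐ y ∂ν.prod (iidMeasure μ), ∀ K, ∃ n, K ≤ pathMass ν n y := by
  obtain ⟨-, C, -, hC, hbounds⟩ := hG
  filter_upwards [Measure.quasiMeasurePreserving_fst.ae hC,
    Measure.quasiMeasurePreserving_fst.ae hbounds,
    Measure.quasiMeasurePreserving_snd.ae (ae_iidMeasure hpos), hunbdd]
    with y hCy hbound hξ hy K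
  obtain ⟨n, hn⟩ := notMem_birkhoffBounded_iff.1 hy (Real.log (C y.1 * max K 1))
  have threshold_ge_one : 1 ≤ C y.1 * max K 1 :=
    one_le_mul_of_one_le_of_one_le hCy (le_max_right _ _)
  have one_le_n : 1 ≤ n := Nat.one_le_iff_ne_zero.2 fun hn0 => by
    subst hn0
    exact hn.not_ge (by simpa using Real.log_nonneg threshold_ge_one)
  rw [birkhoffSum_pathPotential, ← Real.log_prod fun k _ => (hξ k).ne',
    Real.log_lt_iff_lt_exp (by positivity), Real.exp_add,
    Real.exp_log (Finset.prod_pos fun k _ => hξ k)] at hn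
  refine ⟨n, (le_max_left K 1).trans ?_⟩
  calc max K 1 = (C y.1)⁻¹ * (C y.1 * max K 1) := by field_simp
    _ ≤ (C y.1)⁻¹ *
          ((∏ k ∈ Finset.range n, y.2 k) * Real.exp (birkhoffSum (shiftMap b) f n y.1)) := by
        gcongr
    _ = (∏ k ∈ Finset.range n, y.2 k) *
          ((C y.1)⁻¹ * Real.exp (birkhoffSum (shiftMap b) f n y.1)) := by ring
    _ ≤ pathMass ν n y :=
        mul_le_mul_of_nonneg_left (hbound n one_le_n).1 (Finset.prod_nonneg fun k _ => (hξ k).le)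

lemma ae_notMem_birkhoffBounded_pathPotential_of_ae_eq_const {c : ℝ}
    (hc : Real.log =ᵐ[μ] fun _ => c) (hunbdd : ∀ᵐ x ∂ν, ∀ M : ℝ, ∃ᶠ n in atTop,
      M ≤ ∑ k ∈ Finset.range n, (f ((shiftMap b)^[k] x) + c)) :
    ∀ᵐ y ∂ν.prod (iidMeasure μ),
      y ∉ birkhoffBounded (Prod.map (shiftMap b) tailSeq) (pathPotential f) := by
  filter_upwards [Measure.quasiMeasurePreserving_fst.ae hunbdd,
    Measure.quasiMeasurePreserving_snd.ae (ae_iidMeasure hc)] with y hy hξ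
  refine notMem_birkhoffBounded_iff.2 fun M => ?_
  obtain ⟨n, hn⟩ := (hy (M + 1)).exists
  refine ⟨n, (lt_add_one M).trans_le (hn.trans_eq ?_)⟩
  rw [birkhoffSum_pathPotential, Finset.sum_congr rfl fun k _ => hξ k, birkhoffSum,
    Finset.sum_add_distrib, add_comm]

variable [IsProbabilityMeasure ν]

lemma ae_notMem_birkhoffBounded_pathPotential (hT : Ergodic (shiftMap b) ν) (hG : PropertyG ν f)
    (hlog : Integrable Real.log μ) (hlogc : ¬ ∃ c, Real.log =ᵐ[μ] fun _ => c)
    (hent : Tendsto (entropySeq ν) atTop (nhds (∫ a, Real.log a ∂μ))) :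
    ∀ᵐ y ∂ν.prod (iidMeasure μ),
      y ∉ birkhoffBounded (Prod.map (shiftMap b) tailSeq) (pathPotential f) := by
  obtain ⟨hf, C, hC, hC1, hbounds⟩ := hG
  refine ae_notMem_birkhoffBounded μ hT Real.measurable_log hlog hlogc
    (ℓ := fun n x => Real.log (ν (cylinder (wordPrefix x n))).toReal)
    (integrable_comp_wordPrefix ν fun w => Real.log (ν (cylinder w)).toReal)
    (fun n x => log_cylinder_nonpos ν _)
    (by simpa only [inv_mul_integral_log_cylinder] using hent.neg)
    hf (Real.measurable_log.comp hC) ?_ le_rfl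
  filter_upwards [hC1, hbounds] with x hCx hbound n hn
  obtain ⟨lower, upper⟩ := hbound n hn
  have C_pos : 0 < C x := one_pos.trans_le hCx
  have cylinder_pos := (by positivity : 0 < (C x)⁻¹ * Real.exp _).trans_le lower
  calc Real.log (ν (cylinder (wordPrefix x n))).toReal
      ≤ Real.log (C x * Real.exp (birkhoffSum (shiftMap b) f n x)) :=
        Real.log_le_log cylinder_pos upper
    _ = Real.log (C x) + birkhoffSum (shiftMap b) f n x := by
        rw [Real.log_mul C_pos.ne' (Real.exp_pos _).ne', Real.log_exp]

theorem ae_tendsto_cascadeZ_zero_of_notMem_birkhoffBounded {Ω : Type*} [MeasurableSpace Ω]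
    {P : Measure Ω} [IsProbabilityMeasure P] {X : List (Fin b) → Ω → ℝ} {X₀ : Ω → ℝ}
    [IsProbabilityMeasure (P.map X₀)] [IsProbabilityMeasure (sizeBiased (P.map X₀))]
    (hM1 : CascadeM1 P X X₀) (hG : PropertyG ν f)
    (hunbdd : ∀ᵐ y ∂ν.prod (iidMeasure (sizeBiased (P.map X₀))),
      y ∉ birkhoffBounded (Prod.map (shiftMap b) tailSeq) (pathPotential f)) :
    ∀ᵐ ω ∂P, Tendsto (fun n => cascadeZ X ν n ω) atTop (nhds 0) :=
  ae_tendsto_cascadeZ_zero_of_unbounded_pathMass ν hM1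
    (ae_unbounded_pathMass_of_notMem_birkhoffBounded hG (ae_pos_sizeBiased _) hunbdd)

lemma entropy_nonneg {h : ℝ} (hent : Tendsto (entropySeq ν) atTop (nhds h)) : 0 ≤ h :=
  ge_of_tendsto' hent (entropySeq_nonneg ν)

end GibbsPaths

section UniformCase

variable {b : ℕ} {Ω : Type*} {X : List (Fin b) → Ω → ℝ}

open Classical in
/-- The surviving words of length `n`: those to which the cascade gives a nonzero weight. -/
def survivors (X : List (Fin b) → Ω → ℝ) (n : ℕ) (ω : Ω) : Finset (Fin n → Fin b) :=
  Finset.univ.filter fun u => cascadeY X (List.ofFn u) ω ≠ 0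

/-- The event that the weights of all the children of the words in `S` vanish. -/
def childless (X : List (Fin b) → Ω → ℝ) {n : ℕ} (S : Finset (Fin n → Fin b)) : Set Ω :=
  ⋂ p ∈ S ×ˢ (Finset.univ : Finset (Fin b)), X (List.ofFn p.1 ++ [p.2]) ⁻¹' {0}

lemma mem_survivors {n : ℕ} {ω : Ω} {u : Fin n → Fin b} :
    u ∈ survivors X n ω ↔ cascadeY X (List.ofFn u) ω ≠ 0 := by
  simp only [survivors, Finset.mem_filter, Finset.mem_univ, true_and]

lemma cascadeY_ofFn_succ {n : ℕ} (v : Fin (n + 1) → Fin b) (ω : Ω) :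
    cascadeY X (List.ofFn v) ω = cascadeY X (List.ofFn (Fin.init v)) ω *
      X (List.ofFn (Fin.init v) ++ [v (Fin.last n)]) ω := by
  rw [← cascadeY_append_singleton, List.ofFn_succ', List.concat_eq_append]
  rfl

lemma survivors_succ_eq_empty {n : ℕ} {ω : Ω} (h : survivors X n ω = ∅) :
    survivors X (n + 1) ω = ∅ := by
  refine Finset.eq_empty_of_forall_notMem fun v hv => ?_
  rw [mem_survivors, cascadeY_ofFn_succ] at hv
  exact Finset.notMem_empty _ (h ▸ mem_survivors.2 (left_ne_zero_of_mul hv))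

lemma survivors_succ_eq_empty_of_mem_childless {n : ℕ} {ω : Ω}
    (h : ω ∈ childless X (survivors X n ω)) : survivors X (n + 1) ω = ∅ := by
  refine Finset.eq_empty_of_forall_notMem fun v hv => ?_
  rw [mem_survivors, cascadeY_ofFn_succ] at hv
  exact right_ne_zero_of_mul hv (mem_iInter₂.1 h (Fin.init v, v (Fin.last n))
    (Finset.mk_mem_product (mem_survivors.2 (left_ne_zero_of_mul hv)) (Finset.mem_univ _)))

lemma cascadeY_eq_pow_of_ne_zero {c : ℝ} {ω : Ω} (hval : ∀ w ≠ [], X w ω = 0 ∨ X w ω = c)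
    {w : List (Fin b)} (hw : cascadeY X w ω ≠ 0) : cascadeY X w ω = c ^ w.length := by
  rw [cascadeY, Finset.prod_congr rfl fun k hk => (hval _ (take_succ_ne_nil hk)).resolve_left
    (Finset.prod_ne_zero_iff.1 hw k hk), Finset.prod_const, Finset.card_range]

variable {ν : Measure (SymbSpace b)}

lemma entropy_eq_log_of_isUniformMeasure (hb : b ≠ 0) (hu : IsUniformMeasure ν) {h : ℝ}
    (hent : Tendsto (entropySeq ν) atTop (nhds h)) : h = Real.log b := by
  refine tendsto_nhds_unique hent (tendsto_const_nhds.congr' ?_)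
  filter_upwards [eventually_ne_atTop 0] with n hn
  have mass (u : Fin n → Fin b) : (ν (cylinder (List.ofFn u))).toReal = ((b : ℝ) ^ n)⁻¹ := by
    simp [hu (List.ofFn u)]
  have hn' : (n : ℝ) ≠ 0 := Nat.cast_ne_zero.2 hn
  simp only [entropySeq, mass, Finset.sum_const, Finset.card_univ, Fintype.card_fun,
    Fintype.card_fin, nsmul_eq_mul, Real.log_inv, Real.log_pow, Nat.cast_pow]
  field_simp

lemma cascadeZ_eq_card_survivors (hb : b ≠ 0) (hu : IsUniformMeasure ν) {ω : Ω}
    (hval : ∀ w ≠ [], X w ω = 0 ∨ X w ω = b) (n : ℕ) :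
    cascadeZ X ν n ω = (survivors X n ω).card := by
  classical
  have mass_alive {u : Fin n → Fin b} (hY : cascadeY X (List.ofFn u) ω ≠ 0) :
      cascadeY X (List.ofFn u) ω * (ν (cylinder (List.ofFn u))).toReal = 1 := by
    rw [cascadeY_eq_pow_of_ne_zero hval hY, hu]
    simp [hb]
  calc cascadeZ X ν n ω
      = ∑ u : Fin n → Fin b, if cascadeY X (List.ofFn u) ω ≠ 0 then 1 else 0 := by
        refine Finset.sum_congr rfl fun u _ => ?_
        split_ifs with hY
        · exact mass_alive hY
        · rw [not_not.1 hY, zero_mul]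
    _ = (survivors X n ω).card := by rw [Finset.sum_boole, survivors]

variable [MeasurableSpace Ω] {P : Measure Ω} {X₀ : Ω → ℝ}

lemma IsQalphaCascade.measure_eq_zero_ne_zero {α : ℝ} (hQ : IsQalphaCascade P X₀ α)
    (hα : 0 < α) : P {ω | X₀ ω = 0} ≠ 0 := by
  rw [hQ.2]
  exact (tsub_pos_of_lt (ENNReal.ofReal_lt_one.2 (Real.exp_lt_one_iff.2 (neg_neg_of_pos hα)))).ne'

lemma ae_weight_eq_zero_or_eq (hM1 : CascadeM1 P X X₀) {c : ℝ}
    (hval : ∀ᵐ ω ∂P, X₀ ω = 0 ∨ X₀ ω = c) : ∀ᵐ ω ∂P, ∀ w ≠ [], X w ω = 0 ∨ X w ω = c :=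
  ae_all_iff.2 fun w => by
    by_cases hw : w = []
    · simp [hw]
    · filter_upwards [(hM1.ident w hw).symm.ae_snd (p := fun x => x = 0 ∨ x = c)
        ((measurableSet_singleton 0).union (measurableSet_singleton c)) hval] with ω hω _ using hω

lemma measurableSet_survivors_eq (hX : ∀ w, Measurable (X w)) {n : ℕ}
    (S : Finset (Fin n → Fin b)) :
    MeasurableSet[cascadeFiltration hX n] {ω | survivors X n ω = S} := by
  simp only [Finset.ext_iff, mem_survivors, ofPred_forall]
  refine .iInter fun u => ?_
  have alive : MeasurableSet[cascadeFiltration hX n] {ω | cascadeY X (List.ofFn u) ω ≠ 0} :=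
    (measurable_cascadeY_cascadeFiltration hX (List.ofFn u) List.length_ofFn.le
      (measurableSet_singleton 0)).compl
  by_cases hu : u ∈ S
  · simpa only [hu, iff_true] using alive
  · simpa only [hu, iff_false, ← compl_ofPred] using alive.compl

lemma measure_childless (hM1 : CascadeM1 P X X₀) {n : ℕ} (S : Finset (Fin n → Fin b)) :
    P (childless X S) = P {ω | X₀ ω = 0} ^ (S.card * b) := by
  have inj : Function.Injective fun p : (Fin n → Fin b) × Fin b =>
      (⟨List.ofFn p.1 ++ [p.2], by simp⟩ : {w : List (Fin b) // w ≠ []}) := fun p q hpq => by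
    obtain ⟨hinit, hlast⟩ := List.append_inj' (congr_arg Subtype.val hpq) rfl
    exact Prod.ext (List.ofFn_injective hinit) (by simpa using hlast)
  have prob_zero (p : (Fin n → Fin b) × Fin b) :
      P (X (List.ofFn p.1 ++ [p.2]) ⁻¹' {0}) = P {ω | X₀ ω = 0} :=
    (hM1.ident _ (by simp)).measure_mem_eq (measurableSet_singleton 0)
  calc P (childless X S)
      = ∏ p ∈ S ×ˢ Finset.univ, P (X (List.ofFn p.1 ++ [p.2]) ⁻¹' {0}) :=
        (hM1.indep.precomp inj).measure_inter_preimage_eq_mul _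
          fun _ _ => measurableSet_singleton 0
    _ = P {ω | X₀ ω = 0} ^ (S.card * b) := by
        simp only [prob_zero, Finset.prod_const, Finset.card_product, Finset.card_univ,
          Fintype.card_fin]

lemma measure_survivors_eq_inter_childless (hM1 : CascadeM1 P X X₀) {n : ℕ}
    (S : Finset (Fin n → Fin b)) :
    P ({ω | survivors X n ω = S} ∩ childless X S) =
      P {ω | survivors X n ω = S} * P {ω | X₀ ω = 0} ^ (S.card * b) := by
  have indep := indep_iSup_weight_cascadeFiltration hM1 (n := n) (W := {w | w.1.length = n + 1})
    fun w hw => n.lt_succ_self.trans_eq hw.symm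
  have childless_meas : MeasurableSet[⨆ w ∈ {w : {w : List (Fin b) // w ≠ []} |
      w.1.length = n + 1}, MeasurableSpace.comap (X w.1) inferInstance] (childless X S) := by
    refine Finset.measurableSet_biInter _ fun p _ => ?_
    exact (le_iSup₂_of_le (f := fun (w : {w : List (Fin b) // w ≠ []}) _ =>
      MeasurableSpace.comap (X w.1) inferInstance) ⟨List.ofFn p.1 ++ [p.2], by simp⟩
      (by simp) le_rfl) _ ⟨{0}, measurableSet_singleton 0, rfl⟩
  rw [(Indep_iff _ _ _).1 indep.symm _ _ (measurableSet_survivors_eq hM1.meas S) childless_meas,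
    measure_childless hM1]

lemma measurableSet_survivors_eq_empty (hX : ∀ w, Measurable (X w)) (n : ℕ) :
    MeasurableSet {ω | survivors X n ω = ∅} :=
  (cascadeFiltration hX).le n _ (measurableSet_survivors_eq hX ∅)

variable [IsProbabilityMeasure P]

lemma measure_card_survivors_le_mul_le (hM1 : CascadeM1 P X X₀) (n K : ℕ) :
    P {ω | survivors X n ω ≠ ∅ ∧ (survivors X n ω).card ≤ K} * P {ω | X₀ ω = 0} ^ (K * b) ≤
      P ({ω | survivors X (n + 1) ω = ∅} \ {ω | survivors X n ω = ∅}) := by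
  classical
  set small : Finset (Finset (Fin n → Fin b)) := {S | S ≠ ∅ ∧ S.card ≤ K}
  set dead := {ω | survivors X (n + 1) ω = ∅}
  have small_iff (ω : Ω) : survivors X n ω ∈ small ↔
      survivors X n ω ≠ ∅ ∧ (survivors X n ω).card ≤ K := by simp [small]
  have fibre_meas (S : Finset (Fin n → Fin b)) : MeasurableSet (survivors X n ⁻¹' {S}) :=
    (cascadeFiltration hM1.meas).le n _ (measurableSet_survivors_eq hM1.meas S)
  have fibre_le {S : Finset (Fin n → Fin b)} (hS : S ∈ small) :
      P (survivors X n ⁻¹' {S}) * P {ω | X₀ ω = 0} ^ (K * b) ≤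
        P.restrict dead (survivors X n ⁻¹' {S}) := by
    rw [Measure.restrict_apply (fibre_meas S)]
    calc P (survivors X n ⁻¹' {S}) * P {ω | X₀ ω = 0} ^ (K * b)
        ≤ P (survivors X n ⁻¹' {S}) * P {ω | X₀ ω = 0} ^ (S.card * b) := by
          gcongr P _ * ?_
          exact pow_le_pow_right_of_le_one' prob_le_one
            (Nat.mul_le_mul_right b (Finset.mem_filter.1 hS).2.2)
      _ = P (survivors X n ⁻¹' {S} ∩ childless X S) :=
          (measure_survivors_eq_inter_childless hM1 S).symm
      _ ≤ P (survivors X n ⁻¹' {S} ∩ dead) := by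
          refine measure_mono fun ω ⟨hS, hω⟩ => ⟨hS, ?_⟩
          obtain rfl : survivors X n ω = S := hS
          exact survivors_succ_eq_empty_of_mem_childless hω
  simp only [← small_iff]
  calc P (survivors X n ⁻¹' small) * P {ω | X₀ ω = 0} ^ (K * b)
      = ∑ S ∈ small, P (survivors X n ⁻¹' {S}) * P {ω | X₀ ω = 0} ^ (K * b) := by
        rw [← sum_measure_preimage_singleton small fun S _ => fibre_meas S, Finset.sum_mul]
    _ ≤ ∑ S ∈ small, P.restrict dead (survivors X n ⁻¹' {S}) :=
        Finset.sum_le_sum fun S hS => fibre_le hS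
    _ = P.restrict dead (survivors X n ⁻¹' small) :=
        sum_measure_preimage_singleton small fun S _ => fibre_meas S
    _ = P (survivors X n ⁻¹' small ∩ dead) :=
        Measure.restrict_apply' (measurableSet_survivors_eq_empty hM1.meas (n + 1))
    _ ≤ P (dead \ {ω | survivors X n ω = ∅}) :=
        measure_mono fun ω ⟨hω, hdead⟩ => ⟨hdead, ((small_iff ω).1 hω).1⟩

lemma tendsto_measure_survivors_extinction (hX : ∀ w, Measurable (X w)) :
    Tendsto (fun n => P ({ω | survivors X (n + 1) ω = ∅} \ {ω | survivors X n ω = ∅})) atTop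
      (nhds 0) := by
  have mono : Monotone fun n => {ω | survivors X n ω = ∅} :=
    monotone_nat_of_le_succ fun n ω => survivors_succ_eq_empty
  have lim := tendsto_measure_iUnion_atTop (μ := P) mono
  have diff (n : ℕ) : P ({ω | survivors X (n + 1) ω = ∅} \ {ω | survivors X n ω = ∅}) =
      P {ω | survivors X (n + 1) ω = ∅} - P {ω | survivors X n ω = ∅} :=
    measure_sdiff (mono n.le_succ) (measurableSet_survivors_eq_empty hX n).nullMeasurableSet
      (measure_ne_top _ _)
  simp only [diff]
  simpa using ENNReal.Tendsto.sub (lim.comp (tendsto_add_atTop_nat 1)) lim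
    (.inl (measure_ne_top _ _))

lemma tendsto_measure_card_survivors_le (hM1 : CascadeM1 P X X₀) (K : ℕ)
    (h0 : P {ω | X₀ ω = 0} ≠ 0) :
    Tendsto (fun n => P {ω | survivors X n ω ≠ ∅ ∧ (survivors X n ω).card ≤ K}) atTop
      (nhds 0) := by
  have kill_ne_zero : P {ω | X₀ ω = 0} ^ (K * b) ≠ 0 := pow_ne_zero _ h0
  have lim := ENNReal.Tendsto.div_const (tendsto_measure_survivors_extinction (P := P) hM1.meas)
    (.inr kill_ne_zero)
  rw [ENNReal.zero_div] at lim
  refine tendsto_of_tendsto_of_tendsto_of_le_of_le tendsto_const_nhds lim (fun _ => zero_le)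
    fun n => ?_
  rw [ENNReal.le_div_iff_mul_le (.inl kill_ne_zero)
    (.inl (ENNReal.pow_ne_top (measure_ne_top _ _)))]
  exact measure_card_survivors_le_mul_le hM1 n K

theorem ae_tendsto_cascadeZ_zero_of_isUniformMeasure [IsProbabilityMeasure ν]
    (hM1 : CascadeM1 P X X₀) (hb : b ≠ 0) (hu : IsUniformMeasure ν)
    (hval : ∀ᵐ ω ∂P, X₀ ω = 0 ∨ X₀ ω = b) (h0 : P {ω | X₀ ω = 0} ≠ 0) :
    ∀ᵐ ω ∂P, Tendsto (fun n => cascadeZ X ν n ω) atTop (nhds 0) := by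
  refine ae_tendsto_cascadeZ_zero ν hM1 fun ε hε => ENNReal.tendsto_nhds_zero.2 fun δ hδ => ?_
  obtain ⟨K, hK⟩ := ENNReal.exists_inv_nat_lt (ENNReal.half_pos hδ.ne').ne'
  filter_upwards [(tendsto_measure_card_survivors_le hM1 K h0).eventually_le_const
    (ENNReal.half_pos hδ.ne')] with n hn
  have doob : P {ω | (K + 1 : ℝ) ≤ cascadeZ X ν n ω} ≤ δ / 2 := calc
    _ ≤ P {ω | ∃ k ≤ n, (K + 1 : ℝ) ≤ cascadeZ X ν k ω} :=
      measure_mono fun ω hω => ⟨n, le_rfl, hω⟩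
    _ ≤ (ENNReal.ofReal (K + 1))⁻¹ := measure_exists_le_cascadeZ_le ν hM1 (by positivity) n
    _ ≤ (K : ℝ≥0∞)⁻¹ := ENNReal.inv_le_inv.2 (by
      rw [← ENNReal.ofReal_natCast]; exact ENNReal.ofReal_le_ofReal (by linarith))
    _ ≤ δ / 2 := hK.le
  calc P {ω | ε ≤ cascadeZ X ν n ω}
      ≤ P ({ω | survivors X n ω ≠ ∅ ∧ (survivors X n ω).card ≤ K} ∪
          {ω | (K + 1 : ℝ) ≤ cascadeZ X ν n ω}) := by
        refine measure_mono_ae ?_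
        filter_upwards [ae_weight_eq_zero_or_eq hM1 hval] with ω hω (hεZ : ε ≤ cascadeZ X ν n ω)
        have count := cascadeZ_eq_card_survivors hb hu hω n
        have card_pos : 0 < (survivors X n ω).card := by
          exact_mod_cast (hε.trans_le hεZ).trans_eq count
        refine (le_or_gt (survivors X n ω).card K).imp
          (fun hle => ⟨(Finset.card_pos.1 card_pos).ne_empty, hle⟩) fun hgt => ?_
        change (K + 1 : ℝ) ≤ cascadeZ X ν n ω
        rw [count]
        exact_mod_cast hgt
    _ ≤ δ / 2 + δ / 2 := (measure_union_le _ _).trans (add_le_add hn doob)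
    _ = δ := ENNReal.add_halves δ

end UniformCase

/-- **Theorem (singularity in the critical case for Gibbs-like ergodic measures).**
Suppose `ℙ(X ≠ 1) > 0` (so the cascade operator is not the identity). Let `ν` be a
shift-ergodic probability measure on `Σ`, with entropy `h_ν(σ)`, satisfying property (G)
with potential `f`; if `Q = Q_{h_ν(σ)}`, suppose moreover that `ν` satisfies (G̃). Then, if
`h_ν(σ) = h_X`, the measure `ν` is `Q`-singular. -/
theorem singular_in_critical_case_gibbs
    {b : ℕ} (hb : 2 ≤ b)
    {Ω : Type*} [MeasurableSpace Ω] (P : Measure Ω) [IsProbabilityMeasure P]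
    (X : List (Fin b) → Ω → ℝ) (X₀ : Ω → ℝ)
    (hM1 : CascadeM1 P X X₀)
    (hX1 : 0 < P {ω | X₀ ω ≠ 1})
    (ν : Measure (SymbSpace b)) [IsProbabilityMeasure ν]
    (hνerg : Ergodic (shiftMap b) ν)
    (f : SymbSpace b → ℝ) (hG : PropertyG ν f)
    (hν : ℝ) (hent : Tendsto (entropySeq ν) atTop (nhds hν))
    (hGt : IsQalphaCascade P X₀ hν → PropertyGtilde ν f hν)
    (hcrit : entropyX P X₀ = ENNReal.ofReal hν) :
    ∀ᵐ ω ∂P, Tendsto (fun n => cascadeZ X ν n ω) atTop (nhds 0) := by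
  have hb0 : b ≠ 0 := by omega
  have : IsProbabilityMeasure (P.map X₀) :=
    Measure.isProbabilityMeasure_map hM1.meas₀.aemeasurable
  have := isProbabilityMeasure_sizeBiased hM1
  obtain ⟨log_int, log_mean⟩ := integrable_log_sizeBiased_and_integral_eq hM1.meas₀ hM1.nonneg₀
    hM1.mean₀ (entropy_nonneg hent) hcrit
  by_cases hconst : ∃ c, Real.log =ᵐ[sizeBiased (P.map X₀)] fun _ => c
  · obtain ⟨c, hc⟩ := hconst
    obtain rfl : c = hν := by rw [← log_mean, integral_congr_ae hc]; simp
    have hval := ae_eq_zero_or_eq_exp hM1.meas₀ hM1.nonneg₀ hc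
    have hQ := isQalphaCascade_of_ae_eq_zero_or_eq_exp hM1.meas₀ hM1.mean₀ hval
    by_cases hu : IsUniformMeasure ν
    · obtain rfl := entropy_eq_log_of_isUniformMeasure hb0 hu hent
      rw [Real.exp_log (by positivity)] at hval
      exact ae_tendsto_cascadeZ_zero_of_isUniformMeasure hM1 hb0 hu hval
        (hQ.measure_eq_zero_ne_zero (Real.log_pos (by exact_mod_cast hb)))
    · exact ae_tendsto_cascadeZ_zero_of_notMem_birkhoffBounded hM1 hG
        (ae_notMem_birkhoffBounded_pathPotential_of_ae_eq_const hc ((hGt hQ).2 hu))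
  · exact ae_tendsto_cascadeZ_zero_of_notMem_birkhoffBounded hM1 hG
      (ae_notMem_birkhoffBounded_pathPotential hνerg hG log_int hconst (log_mean ▸ hent))

end
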